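/- arXiv:2509.07247 — 2 statements merged into one kernel-verified Lean document; each statement's English description precedes it below -/
import Mathlib

section
/- Let A₁, ..., A_m ⊂ S^d be closed sets such that A_i ∩ (-A_i) = ∅ for all i ∈ [m] and ⋃_i A_i ∪ ⋃_i (-A_i) = S^d. Then there exist indices i₁ < i₂ < ... < i_{d+1} such that ⋂_{j=1}^{d+1} (-1)^j A_{i_j} ≠ ∅, i.e., the intersection of the sets A_{i_j} with alternating signs (-A_{i_1} ∩ A_{i_2} ∩ -A_{i_3} ∩ ...) is nonempty. (Fan's theorem) -/
open Pointwise

/-!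
The proof counts alternating simplices modulo two. Label the vertices of a mod-2 chain by pairs
`(i, ε)` of an index and a sign, and let `Φ_ε c` be the number mod 2 of simplices of `c` whose
labels, sorted by index, have strictly increasing indices and alternating signs beginning with `ε`.
If no simplex of `c` carries both `(i, 1)` and `(i, -1)`, then `Φ_ε (∂c) = Φ_ε c + Φ_{-ε} c`: a
facet that is alternating from `ε` arises by deleting the last vertex of a simplex alternating from
`ε`, or the first vertex of one alternating from `-ε`, and all other such facets cancel in pairs. An
antipodally labelled sphere is built from hemispheres `c 0, c 1, …` with
`∂ (c (k + 1)) = c k + (-1) • c k`, so `Φ_1 (c k) + Φ_{-1} (c k)` does not depend on `k` and equals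
`1`; in particular there is an alternating simplex of top dimension.

To pass from labels to closed sets, subdivide the boundary of the cross-polytope barycentrically
below a scale `δ` and label each vertex by a set `±A_i` that contains it. Once `δ` is smaller than
all distances between `A_i` and `-A_i`, no simplex carries complementary labels, and the alternating
simplices obtained as `δ → 0` accumulate, by compactness, at a point of an alternating intersection.
The radial projection carries the result over to the sphere.
-/

open MvPolynomial NormedSpace Filter Topology

section RestrictSupport

variable {R V W N : Type*} [CommSemiring R] [AddCommMonoid N] [Module R N] {S : Set (V →₀ ℕ)}
  {T : Set (W →₀ ℕ)} {c : MvPolynomial V R}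

theorem map_mem_of_mem_restrictSupport {P : Submodule R N} {f : MvPolynomial V R →ₗ[R] N}
    (h : ∀ s ∈ S, f (monomial s 1) ∈ P) (hc : c ∈ restrictSupport R S) : f c ∈ P := by
  suffices restrictSupport R S ≤ P.comap f from this hc
  rw [restrictSupport_eq_span, Submodule.span_le]
  exact Set.image_subset_iff.2 h

theorem eq_of_mem_restrictSupport {f g : MvPolynomial V R →ₗ[R] N}
    (h : ∀ s ∈ S, f (monomial s 1) = g (monomial s 1)) (hc : c ∈ restrictSupport R S) :
    f c = g c := by
  rw [restrictSupport_eq_span] at hc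
  exact LinearMap.eqOn_span (Set.forall_mem_image.2 h) hc

theorem rename_mem_restrictSupport {f : V → W} (h : ∀ s ∈ S, s.mapDomain f ∈ T)
    (hc : c ∈ restrictSupport R S) : rename f c ∈ restrictSupport R T := by
  refine map_mem_of_mem_restrictSupport (f := (rename f).toLinearMap) (fun s hs => ?_) hc
  rw [AlgHom.toLinearMap_apply, rename_monomial, monomial_mem_restrictSupport]
  exact Or.inl (h s hs)

theorem X_mul_mem_restrictSupport {v : V} {S' : Set (V →₀ ℕ)}
    (h : ∀ s ∈ S, Finsupp.single v 1 + s ∈ S') (hc : c ∈ restrictSupport R S) :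
    X v * c ∈ restrictSupport R S' := by
  refine map_mem_of_mem_restrictSupport (f := LinearMap.mulLeft R (X v)) (fun s hs => ?_) hc
  rw [LinearMap.mulLeft_apply, X, monomial_mul, one_mul, monomial_mem_restrictSupport]
  exact Or.inl (h s hs)

end RestrictSupport

/-- Simplicial chains modulo two with vertices in `V`, unordered and possibly degenerate:
the monomial with exponent `s` is the simplex with multiset of vertices `s`, so that
multiplication is the join, `X v * c` is the cone over `c` with apex `v`, and `1` is the empty
simplex. The degree of a monomial is the dimension of the simplex plus one. -/
abbrev ModTwoChain (V : Type*) := MvPolynomial V (ZMod 2)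

namespace ModTwoChain

variable {V W : Type*}

/-- The augmented boundary operator: deleting one vertex at a time is the derivation that maps every
vertex to the empty simplex `1`. -/
noncomputable def boundary : Derivation (ZMod 2) (ModTwoChain V) (ModTwoChain V) :=
  mkDerivation (ZMod 2) fun _ => 1

@[simp]
theorem boundary_X (v : V) : boundary (X v) = 1 :=
  mkDerivation_X ..

theorem boundary_X_mul (v : V) (c : ModTwoChain V) :
    boundary (X v * c) = c + X v * boundary c := by
  simp [add_comm]

theorem boundary_boundary (c : ModTwoChain V) : boundary (boundary c) = 0 := by
  induction c using MvPolynomial.induction_on with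
  | C a => simp
  | add p q hp hq => simp [hp, hq]
  | mul_X p v hp => simp [hp, CharTwo.add_self_eq_zero]

theorem boundary_rename (f : V → W) (c : ModTwoChain V) :
    boundary (rename f c) = rename f (boundary c) := by
  induction c using MvPolynomial.induction_on with
  | C a => simp
  | add p q hp hq => simp [hp, hq]
  | mul_X p v hp => simp [hp]

theorem boundary_X_sq_mul (v : V) (c : ModTwoChain V) :
    boundary (X v ^ 2 * c) = X v ^ 2 * boundary c := by
  simp [sq, CharTwo.add_self_eq_zero]

theorem boundary_monomial_mem_restrictSupport (s : V →₀ ℕ) :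
    boundary (monomial s 1) ∈
      restrictSupport (ZMod 2) {t | ∃ v, t + Finsupp.single v 1 = s} := by
  rw [boundary, mkDerivation_monomial, one_smul]
  refine Submodule.sum_mem _ fun v hv => ?_
  simp only [smul_eq_mul, mul_one, monomial_mem_restrictSupport]
  exact Or.inl ⟨v, tsub_add_cancel_of_le <| Finsupp.single_le_iff.2 <|
    Nat.one_le_iff_ne_zero.2 (Finsupp.mem_support_iff.1 hv)⟩

theorem X_mul_monomial (v : V) (s : V →₀ ℕ) :
    (X v * monomial s 1 : ModTwoChain V) = monomial (Finsupp.single v 1 + s) 1 := by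
  rw [X, monomial_mul, one_mul]

end ModTwoChain

open ModTwoChain

section SignedLabels

variable {I : Type*}

/-- The antipodal map `(i, ε) ↦ (i, -ε)` on signed labels. -/
def flipSign (x : I × ℤˣ) : I × ℤˣ := (x.1, -x.2)

theorem flipSign_involutive : Function.Involutive (flipSign (I := I)) := fun x => by
  simp [flipSign]

theorem eq_or_eq_flipSign {x y : I × ℤˣ} (h : x.1 = y.1) : x = y ∨ x = flipSign y :=
  or_iff_not_imp_left.2 fun hne =>
    Prod.ext h (Int.units_ne_iff_eq_neg.1 fun h' => hne (Prod.ext h h'))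

/-- The label multisets that do not contain a complementary pair `(i, 1)`, `(i, -1)`; labels may be
repeated. -/
def complementaryFree (I : Type*) : Set (I × ℤˣ →₀ ℕ) :=
  {m | Set.InjOn Prod.fst (m.support : Set (I × ℤˣ))}

end SignedLabels

section Alternating

variable {I : Type*} [LinearOrder I] {ε : ℤˣ} {x : I × ℤˣ} {m : I × ℤˣ →₀ ℕ}

/-- A finite multiset of signed labels is alternating from the sign `ε` if its labels, sorted by
index, have strictly increasing indices and signs `ε, -ε, ε, …`. -/
inductive IsAlternating : ℤˣ → (I × ℤˣ →₀ ℕ) → Prop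
  | zero (ε : ℤˣ) : IsAlternating ε 0
  | single_add {ε : ℤˣ} {i : I} {m : I × ℤˣ →₀ ℕ} (hi : ∀ y ∈ m.support, i < y.1)
      (hm : IsAlternating (-ε) m) : IsAlternating ε (Finsupp.single (i, ε) 1 + m)

namespace IsAlternating

theorem apply_le_one (h : IsAlternating ε m) (x : I × ℤˣ) : m x ≤ 1 := by
  induction h with
  | zero => simp
  | @single_add ε i m hi _ ih =>
    rw [Finsupp.add_apply, Finsupp.single_apply]
    split_ifs with hx
    · have : x ∉ m.support := fun hxm => (hi x hxm).ne (congrArg Prod.fst hx)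
      rw [Finsupp.notMem_support_iff.1 this, add_zero]
    · simpa using ih

theorem single_add_iff (hx : ∀ y ∈ m.support, x.1 < y.1) :
    IsAlternating ε (Finsupp.single x 1 + m) ↔ x.2 = ε ∧ IsAlternating (-ε) m := by
  refine ⟨fun h => ?_, fun ⟨hε, hm⟩ => hε ▸ single_add hx (hε ▸ hm)⟩
  generalize hn : Finsupp.single x 1 + m = n at h
  cases h with
  | zero => simpa using DFunLike.congr_fun hn x
  | @single_add _ i m' hi hm' =>
    obtain rfl : x = (i, ε) := by
      by_contra hne
      have hxm' : m' x ≠ 0 := by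
        have := DFunLike.congr_fun hn x
        simp only [Finsupp.add_apply, Finsupp.single_eq_same, Finsupp.single_eq_of_ne hne] at this
        omega
      have him : m (i, ε) ≠ 0 := by
        have := DFunLike.congr_fun hn (i, ε)
        simp only [Finsupp.add_apply, Finsupp.single_eq_same,
          Finsupp.single_eq_of_ne (Ne.symm hne)] at this
        omega
      exact lt_asymm (hi x (Finsupp.mem_support_iff.2 hxm'))
        (hx (i, ε) (Finsupp.mem_support_iff.2 him))
    exact ⟨rfl, add_left_cancel hn ▸ hm'⟩

theorem exists_strictMono (h : IsAlternating ε m) {n : ℕ} (hn : m.degree = n) :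
    ∃ x : Fin n → I × ℤˣ, StrictMono (Prod.fst ∘ x) ∧
      ∀ j, x j ∈ m.support ∧ (x j).2 = (-1) ^ (j : ℕ) * ε := by
  induction h generalizing n with
  | zero =>
    obtain rfl : 0 = n := by simpa using hn
    exact ⟨Fin.elim0, fun j => j.elim0, fun j => j.elim0⟩
  | @single_add ε i m hi _ ih =>
    obtain ⟨x, hmono, hx⟩ := ih rfl
    obtain rfl : m.degree + 1 = n := by simpa [add_comm] using hn
    refine ⟨Fin.cons (i, ε) x, ?_, Fin.cases ?_ fun j => ?_⟩
    · rw [Fin.comp_cons]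
      exact Fin.strictMono_cons.2 ⟨fun j => hi _ (hx j).1, hmono⟩
    · simp
    · have := (hx j).1
      rw [Fin.cons_succ, (hx j).2, Fin.val_succ, pow_succ]
      simp_all

end IsAlternating

theorem IsAlternating.mapDomain_flipSign (h : IsAlternating ε m) :
    IsAlternating (-ε) (m.mapDomain flipSign) := by
  induction h with
  | zero => simpa using zero _
  | @single_add ε i m hi hm ih =>
    rw [Finsupp.mapDomain_add, Finsupp.mapDomain_single]
    refine single_add (fun y hy => ?_) ih
    classical
    obtain ⟨z, hz, rfl⟩ := Finset.mem_image.1 (Finsupp.mapDomain_support hy)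
    exact hi z hz

theorem isAlternating_mapDomain_flipSign :
    IsAlternating ε (m.mapDomain flipSign) ↔ IsAlternating (-ε) m := by
  refine ⟨fun h => ?_, fun h => by simpa using h.mapDomain_flipSign⟩
  simpa [← Finsupp.mapDomain_comp, flipSign_involutive.comp_self] using h.mapDomain_flipSign

open Classical in
/-- The number modulo two of simplices of a labelled chain that are alternating from the sign
`ε`. -/
noncomputable def alternatingCount (ε : ℤˣ) : ModTwoChain (I × ℤˣ) →ₗ[ZMod 2] ZMod 2 :=
  (basisMonomials _ _).constr (ZMod 2) fun m => if IsAlternating ε m then 1 else 0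

open Classical in
theorem alternatingCount_monomial (ε : ℤˣ) (m : I × ℤˣ →₀ ℕ) :
    alternatingCount ε (monomial m 1) = if IsAlternating ε m then 1 else 0 :=
  (basisMonomials _ _).constr_basis ..

theorem alternatingCount_one (ε : ℤˣ) : alternatingCount (I := I) ε 1 = 1 :=
  (alternatingCount_monomial ε 0).trans (if_pos (.zero ε))

theorem alternatingCount_X_mul {c : ModTwoChain (I × ℤˣ)}
    (hc : c ∈ restrictSupport (ZMod 2) {m | ∀ y ∈ m.support, x.1 < y.1}) :
    alternatingCount ε (X x * c) = if x.2 = ε then alternatingCount (-ε) c else 0 := by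
  classical
  have := eq_of_mem_restrictSupport (f := alternatingCount ε ∘ₗ LinearMap.mulLeft (ZMod 2) (X x))
    (g := if x.2 = ε then alternatingCount (-ε) else 0) (fun m hm => ?_) hc
  · split_ifs at this ⊢ <;> simpa using this
  · split_ifs with hε <;>
      simp [X_mul_monomial, alternatingCount_monomial, IsAlternating.single_add_iff hm, hε]

theorem exists_eq_single_add_of_mem_complementaryFree (hm : m ∈ complementaryFree I) (h0 : m ≠ 0) :
    ∃ x, ∃ m' ∈ complementaryFree I, m = Finsupp.single x 1 + m' ∧
      (x ∈ m'.support ∨ ∀ y ∈ m'.support, x.1 < y.1) := by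
  obtain ⟨x, hx, hmin⟩ := m.support.exists_min_image Prod.fst (Finsupp.support_nonempty_iff.2 h0)
  have hsub : (m - Finsupp.single x 1).support ⊆ m.support :=
    Finsupp.support_mono tsub_le_self
  refine ⟨x, m - Finsupp.single x 1, hm.mono hsub, ?_, or_iff_not_imp_left.2 fun hx' y hy => ?_⟩
  · exact (add_tsub_cancel_of_le <| Finsupp.single_le_iff.2 <|
      Nat.one_le_iff_ne_zero.2 (Finsupp.mem_support_iff.1 hx)).symm
  · exact (hmin y (hsub hy)).lt_of_ne fun hxy => hx' (hm hx (hsub hy) hxy ▸ hy)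

theorem alternatingCount_X_sq_mul (ε : ℤˣ) (x : I × ℤˣ) (c : ModTwoChain (I × ℤˣ)) :
    alternatingCount ε (X x ^ 2 * c) = 0 := by
  suffices alternatingCount ε ∘ₗ LinearMap.mulLeft (ZMod 2) (X x ^ 2) = 0 from
    LinearMap.congr_fun this c
  refine (basisMonomials _ _).ext fun m => ?_
  have : ¬ IsAlternating ε (Finsupp.single x 1 + (Finsupp.single x 1 + m)) := fun h => by
    simpa using h.apply_le_one x
  simp [sq, X_mul_monomial, alternatingCount_monomial, this]

theorem alternatingCount_boundary_monomial (ε : ℤˣ) (hm : m ∈ complementaryFree I) :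
    alternatingCount ε (boundary (monomial m 1)) =
      alternatingCount ε (monomial m 1) + alternatingCount (-ε) (monomial m 1) := by
  induction hn : m.degree generalizing m ε with
  | zero =>
    obtain rfl := m.degree_eq_zero_iff.1 hn
    simp [alternatingCount_one, CharTwo.add_self_eq_zero]
  | succ n ih =>
    obtain ⟨x, m', hm', rfl, hx | hx⟩ :=
      exists_eq_single_add_of_mem_complementaryFree hm (by rintro rfl; simp at hn)
    · -- A repeated vertex splits off as a square, and chains divisible by a square are never
      -- counted; the derivation `∂` preserves divisibility by a square in characteristic two.
      have hsq : monomial (Finsupp.single x 1 + m') 1 =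
          (X x ^ 2 * monomial (m' - Finsupp.single x 1) 1 : ModTwoChain (I × ℤˣ)) := by
        rw [sq, mul_assoc, X_mul_monomial, X_mul_monomial, add_tsub_cancel_of_le]
        exact Finsupp.single_le_iff.2 (Nat.one_le_iff_ne_zero.2 (Finsupp.mem_support_iff.1 hx))
      simp only [hsq, boundary_X_sq_mul, alternatingCount_X_sq_mul, add_zero]
    · have hdeg : m'.degree = n := by simpa [add_comm 1] using hn
      have hbd : boundary (monomial m' 1) ∈
          restrictSupport (ZMod 2) {m | ∀ y ∈ m.support, x.1 < y.1} := by
        refine restrictSupport_mono _ ?_ (boundary_monomial_mem_restrictSupport m')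
        rintro t ⟨v, rfl⟩ y hy
        exact hx y (Finsupp.support_mono le_self_add hy)
      have hmem : monomial m' 1 ∈ restrictSupport (ZMod 2) {m | ∀ y ∈ m.support, x.1 < y.1} :=
        (monomial_mem_restrictSupport _).2 (Or.inl hx)
      rw [← X_mul_monomial, boundary_X_mul, map_add, alternatingCount_X_mul hbd,
        alternatingCount_X_mul hmem, alternatingCount_X_mul hmem, ih (-ε) hm' hdeg, neg_neg]
      obtain rfl | hε := eq_or_ne x.2 ε
      · simp only [if_true, if_neg (units_ne_neg_self x.2)]
        grind
      · simp [Int.units_ne_iff_eq_neg.1 hε]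

theorem alternatingCount_boundary (ε : ℤˣ) {c : ModTwoChain (I × ℤˣ)}
    (hc : c ∈ restrictSupport (ZMod 2) (complementaryFree I)) :
    alternatingCount ε (boundary c) = alternatingCount ε c + alternatingCount (-ε) c := by
  have := eq_of_mem_restrictSupport (f := alternatingCount ε ∘ₗ boundary.toLinearMap)
    (g := alternatingCount ε + alternatingCount (-ε))
    (fun m hm => by simpa using alternatingCount_boundary_monomial ε hm) hc
  simpa using this

theorem alternatingCount_rename_flipSign (ε : ℤˣ) (c : ModTwoChain (I × ℤˣ)) :
    alternatingCount ε (rename flipSign c) = alternatingCount (-ε) c := by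
  classical
  suffices alternatingCount ε ∘ₗ (rename flipSign).toLinearMap =
      alternatingCount (-ε) by
    simpa using LinearMap.congr_fun this c
  refine (basisMonomials _ _).ext fun m => ?_
  simp only [coe_basisMonomials, LinearMap.comp_apply, AlgHom.toLinearMap_apply, rename_monomial,
    alternatingCount_monomial]
  exact if_congr isAlternating_mapDomain_flipSign rfl rfl

end Alternating

/-- A tower of spheres up to dimension `n` with antipodal map `τ`, given by hemispheres: the
boundary of `c (k + 1)` is the `k`-sphere `c k + τ (c k)`, and `∂ (c 0) = 1` expresses that `c 0`
has an odd number of points. That `c k` is a `k`-chain is not part of the definition. -/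
structure IsAntipodalTower {V : Type*} (τ : V → V) (n : ℕ) (c : ℕ → ModTwoChain V) : Prop where
  boundary_zero : boundary (c 0) = 1
  boundary_succ : ∀ k < n, boundary (c (k + 1)) = c k + rename τ (c k)

section Fan

variable {V W I : Type*} [LinearOrder I] {n : ℕ}

theorem IsAntipodalTower.map_rename {τ : V → V} {σ : W → W} {c : ℕ → ModTwoChain V} {f : V → W}
    {K : Set V} (hc : IsAntipodalTower τ n c) (hf : ∀ x ∈ K, f (τ x) = σ (f x))
    (hcK : ∀ k < n, c k ∈ restrictSupport (ZMod 2) {s | (s.support : Set V) ⊆ K}) :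
    IsAntipodalTower σ n fun k => rename f (c k) where
  boundary_zero := by rw [boundary_rename, hc.boundary_zero, map_one]
  boundary_succ k hk := by
    have hcomm : rename f (rename τ (c k)) = rename σ (rename f (c k)) := by
      simp only [rename_rename]
      refine eq_of_mem_restrictSupport (f := (rename (f ∘ τ)).toLinearMap)
        (g := (rename (σ ∘ f)).toLinearMap) (fun s hs => ?_) (hcK k hk)
      simp only [AlgHom.toLinearMap_apply, rename_monomial]
      exact congrArg (monomial · 1) (Finsupp.mapDomain_congr fun x hx => hf x (hs hx))
    rw [boundary_rename, hc.boundary_succ k hk, map_add, hcomm]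

theorem IsAntipodalTower.sum_alternatingCount {c : ℕ → ModTwoChain (I × ℤˣ)}
    (hc : IsAntipodalTower flipSign n c)
    (hfree : ∀ k ≤ n, c k ∈ restrictSupport (ZMod 2) (complementaryFree I)) {k : ℕ} (hk : k ≤ n) :
    alternatingCount 1 (c k) + alternatingCount (-1) (c k) = 1 := by
  cases k with
  | zero => rw [← alternatingCount_boundary 1 (hfree 0 hk), hc.boundary_zero, alternatingCount_one]
  | succ k =>
    rw [← alternatingCount_boundary 1 (hfree _ hk), hc.boundary_succ k hk, map_add,
      alternatingCount_rename_flipSign]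
    exact hc.sum_alternatingCount hfree (Nat.le_of_succ_le hk)

theorem IsAntipodalTower.exists_isAlternating {S : Set (I × ℤˣ →₀ ℕ)}
    {c : ℕ → ModTwoChain (I × ℤˣ)} (hc : IsAntipodalTower flipSign n c)
    (hfree : ∀ k ≤ n, c k ∈ restrictSupport (ZMod 2) (complementaryFree I))
    (hS : c n ∈ restrictSupport (ZMod 2) S) : ∃ m ∈ S, ∃ ε, IsAlternating ε m := by
  classical
  by_contra! h
  have hzero (ε : ℤˣ) : alternatingCount ε (c n) = 0 :=
    eq_of_mem_restrictSupport (g := 0)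
      (fun m hm => (alternatingCount_monomial ε m).trans (if_neg (h m hm ε))) hS
  simpa [hzero] using hc.sum_alternatingCount hfree le_rfl

end Fan

section SmallSimplices

variable {V : Type*} [PseudoMetricSpace V] {K : Set V} {n : ℕ} {δ : ℝ}

/-- The simplices with `n` vertices, counted with multiplicity, in `K` and diameter at most `δ`. -/
def smallSimplices (K : Set V) (n : ℕ) (δ : ℝ) : Set (V →₀ ℕ) :=
  {s | s.degree = n ∧ (s.support : Set V) ⊆ K ∧ ∀ x ∈ s.support, ∀ y ∈ s.support, dist x y ≤ δ}

theorem smallSimplices_mono {L : Set V} {η : ℝ} (hKL : K ⊆ L) (hδη : δ ≤ η) :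
    smallSimplices K n δ ⊆ smallSimplices L n η :=
  fun _ hs => ⟨hs.1, hs.2.1.trans hKL, fun x hx y hy => (hs.2.2 x hx y hy).trans hδη⟩

theorem single_add_mem_smallSimplices {b : V} {t : V →₀ ℕ} (hb : b ∈ K) (hδ : 0 ≤ δ)
    (ht : t ∈ smallSimplices (K ∩ Metric.closedBall b δ) n δ) :
    Finsupp.single b 1 + t ∈ smallSimplices K (n + 1) δ := by
  classical
  obtain ⟨hdeg, hsub, hdist⟩ := ht
  have hmem {x : V} (hx : x ∈ (Finsupp.single b 1 + t).support) : x = b ∨ x ∈ t.support := by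
    obtain h | h := Finset.mem_union.1 (Finsupp.support_add hx)
    · exact Or.inl (Finset.mem_singleton.1 (Finsupp.support_single_subset h))
    · exact Or.inr h
  refine ⟨by simp [hdeg, add_comm], fun x hx => ?_, fun x hx y hy => ?_⟩
  · obtain rfl | hx := hmem hx
    exacts [hb, (hsub hx).1]
  · obtain rfl | hx' := hmem hx <;> obtain rfl | hy' := hmem hy
    · simpa using hδ
    · exact (dist_comm _ _).trans_le (hsub hy').2
    · exact (hsub hx').2
    · exact hdist x hx' y hy'

theorem boundary_monomial_mem_smallSimplices {s : V →₀ ℕ}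
    (hs : s ∈ smallSimplices K (n + 1) δ) :
    boundary (monomial s 1) ∈ restrictSupport (ZMod 2) (smallSimplices K n δ) := by
  refine restrictSupport_mono _ ?_ (boundary_monomial_mem_restrictSupport s)
  rintro t ⟨v, rfl⟩
  have hsub : t.support ⊆ (t + Finsupp.single v 1).support := Finsupp.support_mono le_self_add
  exact ⟨by simpa using hs.1, fun x hx => hs.2.1 (hsub hx),
    fun x hx y hy => hs.2.2 x (hsub hx) y (hsub hy)⟩

theorem mapDomain_mem_complementaryFree {I : Type*} {lab : V → I × ℤˣ} {s : V →₀ ℕ}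
    (hcompl : ∀ x ∈ K, ∀ y ∈ K, dist x y ≤ δ → lab x ≠ flipSign (lab y))
    (hs : s ∈ smallSimplices K n δ) : s.mapDomain lab ∈ complementaryFree I := by
  classical
  intro x hx y hy hxy
  obtain ⟨x, hxs, rfl⟩ := Finset.mem_image.1 (Finsupp.mapDomain_support hx)
  obtain ⟨y, hys, rfl⟩ := Finset.mem_image.1 (Finsupp.mapDomain_support hy)
  exact (eq_or_eq_flipSign hxy).resolve_right
    (hcompl x (hs.2.1 hxs) y (hs.2.1 hys) (hs.2.2 x hxs y hys))

end SmallSimplices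

section Subdivision

variable {E F : Type*} [AddCommGroup E] [Module ℝ E] [AddCommGroup F] [Module ℝ F]

/-- The barycenter of a simplex, weighted by the multiplicities of its vertices; it is `0` for the
empty simplex. -/
noncomputable def barycenter (s : E →₀ ℕ) : E :=
  (s.degree : ℝ)⁻¹ • Finsupp.linearCombination ℕ id s

theorem barycenter_mapDomain (f : E →ₗ[ℝ] F) (s : E →₀ ℕ) :
    barycenter (s.mapDomain f) = f (barycenter s) := by
  rw [barycenter, Finsupp.degree_mapDomain, Finsupp.linearCombination_mapDomain]
  simp [barycenter, Finsupp.linearCombination_apply, Finsupp.sum]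

theorem barycenter_mem_of_convex {K : Set E} (hK : Convex ℝ K) {s : E →₀ ℕ}
    (hs : (s.support : Set E) ⊆ K) (h0 : s ≠ 0) : barycenter s ∈ K := by
  have hcm : barycenter s = s.support.centerMass (fun x => (s x : ℝ)) id := by
    simp [barycenter, Finset.centerMass, Finsupp.degree_apply, Finsupp.linearCombination_apply,
      Finsupp.sum, Nat.cast_smul_eq_nsmul]
  rw [hcm]
  refine hK.centerMass_mem (fun _ _ => Nat.cast_nonneg _) ?_ hs
  rw [← Nat.cast_sum, ← Finsupp.degree_apply]
  exact Nat.cast_pos.2 (Nat.pos_of_ne_zero (mt s.degree_eq_zero_iff.1 h0))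

/-- Barycentric subdivision of chains all of whose simplices have exactly `n` vertices. For other
chains the value is not a subdivision; fixing `n` makes the recursion along the boundary
structural. -/
noncomputable def subdivision : ℕ → ModTwoChain E →ₗ[ZMod 2] ModTwoChain E
  | 0 => LinearMap.id
  | n + 1 => (basisMonomials _ _).constr (ZMod 2) fun s =>
      X (barycenter s) * subdivision n (boundary (monomial s 1))

theorem subdivision_succ_monomial (n : ℕ) (s : E →₀ ℕ) :
    subdivision (n + 1) (monomial s 1) =
      X (barycenter s) * subdivision n (boundary (monomial s 1)) :=
  (basisMonomials E (ZMod 2)).constr_basis ..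

theorem boundary_subdivision (n : ℕ) (c : ModTwoChain E) :
    boundary (subdivision (n + 1) c) = subdivision n (boundary c) := by
  suffices boundary.toLinearMap ∘ₗ subdivision (n + 1) =
      subdivision n ∘ₗ (boundary (V := E)).toLinearMap by
    simpa using LinearMap.congr_fun this c
  refine (basisMonomials _ _).ext fun s => ?_
  have hcycle : boundary (subdivision n (boundary (monomial s 1))) = 0 := by
    cases n with
    | zero => exact boundary_boundary _
    | succ n => rw [boundary_subdivision n, boundary_boundary, map_zero]
  simp [subdivision_succ_monomial, hcycle]

theorem subdivision_rename (f : E →ₗ[ℝ] F) (n : ℕ) (c : ModTwoChain E) :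
    subdivision n (rename f c) = rename f (subdivision n c) := by
  induction n generalizing c with
  | zero => rfl
  | succ n ih =>
    suffices subdivision (n + 1) ∘ₗ (rename f).toLinearMap =
        (rename f).toLinearMap ∘ₗ subdivision (n + 1) by
      simpa using LinearMap.congr_fun this c
    refine (basisMonomials _ _).ext fun s => ?_
    simp [rename_monomial, subdivision_succ_monomial, barycenter_mapDomain, ← boundary_rename,
      ← ih]

theorem IsAntipodalTower.map_subdivision {n : ℕ} {c : ℕ → ModTwoChain E}
    (hc : IsAntipodalTower Neg.neg n c) :
    IsAntipodalTower Neg.neg n fun k => subdivision (k + 1) (c k) where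
  boundary_zero := by rw [boundary_subdivision, hc.boundary_zero]; rfl
  boundary_succ k hk := by
    rw [boundary_subdivision, hc.boundary_succ k hk, map_add]
    exact congrArg _ (subdivision_rename (LinearEquiv.neg ℝ).toLinearMap _ _)

end Subdivision

theorem norm_linearCombination_sub_le {E : Type*} [SeminormedAddCommGroup E] {t : E →₀ ℕ}
    {v : E} {δ : ℝ} (hδ : ∀ x ∈ t.support, dist x v ≤ δ) :
    ‖Finsupp.linearCombination ℕ id t - t.degree • v‖ ≤ t.degree * δ := by
  calc ‖Finsupp.linearCombination ℕ id t - t.degree • v‖ = ‖∑ x ∈ t.support, t x • (x - v)‖ := by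
        simp [Finsupp.linearCombination_apply, Finsupp.sum, Finsupp.degree_apply, smul_sub,
          Finset.sum_smul]
    _ ≤ ∑ x ∈ t.support, t x * δ := norm_sum_le_of_le _ fun x hx => by
        grw [norm_nsmul_le, ← dist_eq_norm, hδ x hx]
    _ = t.degree * δ := by rw [← Finset.sum_mul, Finsupp.degree_apply, Nat.cast_sum]

section Mesh

variable {E : Type*} [SeminormedAddCommGroup E] [NormedSpace ℝ E]

theorem dist_barycenter_le {s : E →₀ ℕ} {v : E} {δ : ℝ} (hv : v ∈ s.support)
    (hδ : ∀ x ∈ s.support, dist x v ≤ δ) :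
    dist (barycenter s) v ≤ (1 - 1 / s.degree) * δ := by
  obtain ⟨t, rfl⟩ := exists_add_of_le <| Finsupp.single_le_iff.2 <|
    Nat.one_le_iff_ne_zero.2 (Finsupp.mem_support_iff.1 hv)
  have ht := norm_linearCombination_sub_le fun x hx =>
    hδ x (Finsupp.support_mono le_add_self hx)
  have hpos : (0 : ℝ) < t.degree + 1 := by positivity
  have hb : barycenter (Finsupp.single v 1 + t) - v =
      (t.degree + 1 : ℝ)⁻¹ • (Finsupp.linearCombination ℕ id t - t.degree • v) := by
    rw [eq_inv_smul_iff₀ hpos.ne', barycenter]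
    simp only [id_eq, map_add, Finsupp.degree_single, Finsupp.linearCombination_single]
    push_cast
    rw [add_comm (1 : ℝ), smul_sub, smul_inv_smul₀ hpos.ne', add_smul,
      Nat.cast_smul_eq_nsmul, one_smul, one_smul]
    abel
  rw [dist_eq_norm, hb, norm_smul, Real.norm_of_nonneg (by positivity)]
  grw [ht]
  apply le_of_eq
  rw [map_add, Finsupp.degree_single, Nat.cast_add, Nat.cast_one]
  field_simp
  ring

theorem subdivision_monomial_mem_restrictSupport {K : Set E} (hK : Convex ℝ K) {n N : ℕ}
    (hn : n ≤ N) {δ : ℝ} {s : E →₀ ℕ} (hs : s ∈ smallSimplices K n δ) :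
    subdivision n (monomial s 1) ∈
      restrictSupport (ZMod 2) (smallSimplices K n ((1 - 1 / N) * δ)) := by
  induction n generalizing K s with
  | zero =>
    obtain rfl := s.degree_eq_zero_iff.1 hs.1
    exact (monomial_mem_restrictSupport _).2 (Or.inl (by simp [smallSimplices]))
  | succ n ih =>
    set δ' := (1 - 1 / (N : ℝ)) * δ
    set b := barycenter s
    obtain ⟨hdeg, hsub, hdist⟩ := hs
    have h0 : s ≠ 0 := by rintro rfl; simp at hdeg
    obtain ⟨v, hv⟩ := Finsupp.support_nonempty_iff.2 h0
    have hδ : 0 ≤ δ := dist_nonneg.trans (hdist v hv v hv)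
    have hball : ∀ x ∈ s.support, x ∈ Metric.closedBall b δ' := fun x hx => by
      rw [Metric.mem_closedBall, dist_comm]
      grw [dist_barycenter_le hx fun y hy => hdist y hy x hx, hdeg, hn]
    have hδ' : 0 ≤ δ' := dist_nonneg.trans (hball v hv)
    have hs' : s ∈ smallSimplices (K ∩ Metric.closedBall b δ') (n + 1) δ :=
      ⟨hdeg, fun x hx => ⟨hsub hx, hball x hx⟩, hdist⟩
    have hrec : subdivision n (boundary (monomial s 1)) ∈
        restrictSupport (ZMod 2) (smallSimplices (K ∩ Metric.closedBall b δ') n δ') :=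
      map_mem_of_mem_restrictSupport
        (fun t ht => ih (hK.inter (convex_closedBall b δ')) (Nat.le_of_succ_le hn) ht)
        (boundary_monomial_mem_smallSimplices hs')
    rw [subdivision_succ_monomial]
    exact X_mul_mem_restrictSupport (fun t ht =>
      single_add_mem_smallSimplices (barycenter_mem_of_convex hK hsub h0) hδ' ht) hrec

theorem IsAntipodalTower.exists_smallSimplices {ι : Type*} {n : ℕ} {c : ℕ → ModTwoChain E}
    {K : ι → Set E} {D δ : ℝ}
    (hc : IsAntipodalTower Neg.neg n c) (hK : ∀ i, Convex ℝ (K i))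
    (hcK : ∀ k ≤ n, c k ∈ restrictSupport (ZMod 2) (⋃ i, smallSimplices (K i) (k + 1) D))
    (hδ : 0 < δ) :
    ∃ c', IsAntipodalTower Neg.neg n c' ∧
      ∀ k ≤ n, c' k ∈ restrictSupport (ZMod 2) (⋃ i, smallSimplices (K i) (k + 1) δ) := by
  set r : ℝ := 1 - 1 / (n + 1 : ℕ)
  have hiter (j : ℕ) : ∃ c', IsAntipodalTower Neg.neg n c' ∧
      ∀ k ≤ n, c' k ∈ restrictSupport (ZMod 2) (⋃ i, smallSimplices (K i) (k + 1) (r ^ j * D)) := by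
    induction j with
    | zero => exact ⟨c, hc, by simpa using hcK⟩
    | succ j ih =>
      obtain ⟨c', hc', hcK'⟩ := ih
      refine ⟨_, hc'.map_subdivision, fun k hk => map_mem_of_mem_restrictSupport ?_ (hcK' k hk)⟩
      intro s hs
      obtain ⟨i, hi⟩ := Set.mem_iUnion.1 hs
      rw [pow_succ', mul_assoc]
      exact restrictSupport_mono _ (Set.subset_iUnion_of_subset i subset_rfl)
        (subdivision_monomial_mem_restrictSupport (hK i) (Nat.succ_le_succ hk) hi)
  have hr : |r| < 1 := by
    have : (0 : ℝ) < 1 / (n + 1 : ℕ) := by positivity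
    have : 1 / ((n + 1 : ℕ) : ℝ) ≤ 1 := by simpa using Nat.cast_inv_le_one (n + 1)
    exact abs_sub_lt_iff.2 (by constructor <;> linarith)
  have hlim : Tendsto (fun j => r ^ j * D) atTop (𝓝 0) := by
    simpa using (tendsto_pow_atTop_nhds_zero_of_abs_lt_one hr).mul_const D
  obtain ⟨j, hj⟩ := (hlim.eventually_le_const hδ).exists
  obtain ⟨c', hc', hcK'⟩ := hiter j
  exact ⟨c', hc', fun k hk => restrictSupport_mono _
    (Set.iUnion_mono fun i => smallSimplices_mono subset_rfl hj) (hcK' k hk)⟩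

end Mesh

section Hemisphere

/-- The upper `k`-dimensional hemisphere of the abstract cross-polytope, whose vertices `±e_i` are
encoded as `(i, ±1)`: the cone with apex `e_k` over the `(k - 1)`-dimensional sphere. -/
noncomputable def hemisphere : ℕ → ModTwoChain (ℕ × ℤˣ)
  | 0 => X (0, 1)
  | k + 1 => X (k + 1, 1) * (hemisphere k + rename flipSign (hemisphere k))

theorem boundary_hemisphere_succ (k : ℕ) :
    boundary (hemisphere (k + 1)) = hemisphere k + rename flipSign (hemisphere k) := by
  have hcycle : boundary (hemisphere k + rename flipSign (hemisphere k)) = 0 := by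
    cases k with
    | zero => simp [hemisphere, CharTwo.add_self_eq_zero]
    | succ k =>
      rw [map_add, boundary_rename, boundary_hemisphere_succ k, map_add, rename_rename,
        flipSign_involutive.comp_self, rename_id_apply, add_comm (rename _ _)]
      exact CharTwo.add_self_eq_zero _
  rw [hemisphere, boundary_X_mul, hcycle, mul_zero, add_zero]

theorem isAntipodalTower_hemisphere (n : ℕ) : IsAntipodalTower flipSign n hemisphere where
  boundary_zero := boundary_X _
  boundary_succ k _ := boundary_hemisphere_succ k

/-- The `k`-dimensional simplices of the abstract cross-polytope on the vertices `±e_0, …, ±e_k`: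
a sign `σ i` is chosen for each axis `i`. -/
def crossPolytopeSimplices (k : ℕ) : Set (ℕ × ℤˣ →₀ ℕ) :=
  {m | m.degree = k + 1 ∧ ∃ σ : ℕ → ℤˣ, ∀ x ∈ m.support, x.1 ≤ k ∧ x.2 = σ x.1}

theorem mapDomain_flipSign_mem_crossPolytopeSimplices {k : ℕ} {m : ℕ × ℤˣ →₀ ℕ}
    (hm : m ∈ crossPolytopeSimplices k) : m.mapDomain flipSign ∈ crossPolytopeSimplices k := by
  classical
  obtain ⟨hdeg, σ, hσ⟩ := hm
  refine ⟨by rw [Finsupp.degree_mapDomain, hdeg], -σ, fun x hx => ?_⟩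
  obtain ⟨y, hy, rfl⟩ := Finset.mem_image.1 (Finsupp.mapDomain_support hx)
  exact ⟨(hσ y hy).1, congrArg Neg.neg (hσ y hy).2⟩

theorem single_add_mem_crossPolytopeSimplices {k : ℕ} {m : ℕ × ℤˣ →₀ ℕ} (ε : ℤˣ)
    (hm : m ∈ crossPolytopeSimplices k) :
    Finsupp.single (k + 1, ε) 1 + m ∈ crossPolytopeSimplices (k + 1) := by
  classical
  obtain ⟨hdeg, σ, hσ⟩ := hm
  refine ⟨by simp [hdeg, add_comm], Function.update σ (k + 1) ε, fun x hx => ?_⟩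
  obtain hx | hx := Finset.mem_union.1 (Finsupp.support_add hx)
  · obtain rfl := Finset.mem_singleton.1 (Finsupp.support_single_subset hx)
    exact ⟨le_rfl, by simp⟩
  · obtain ⟨hle, hx⟩ := hσ x hx
    exact ⟨hle.trans k.le_succ, by rwa [Function.update_of_ne (by omega)]⟩

theorem hemisphere_mem_restrictSupport (k : ℕ) :
    hemisphere k ∈ restrictSupport (ZMod 2) (crossPolytopeSimplices k) := by
  induction k with
  | zero =>
    refine (monomial_mem_restrictSupport _).2 (Or.inl ?_)
    refine ⟨by simp, 1, fun x hx => ?_⟩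
    obtain rfl := Finset.mem_singleton.1 (Finsupp.support_single_subset hx)
    exact ⟨le_rfl, rfl⟩
  | succ k ih =>
    exact X_mul_mem_restrictSupport (fun m => single_add_mem_crossPolytopeSimplices 1)
      (Submodule.add_mem _ ih
        (rename_mem_restrictSupport (fun m => mapDomain_flipSign_mem_crossPolytopeSimplices) ih))

end Hemisphere

section CrossPolytope

variable {E : Type*} [AddCommGroup E] [Module ℝ E] {n : ℕ} {v : Fin (n + 1) → E}

/-- The facet of the cross-polytope with vertices `± v i` selected by the signs `σ`. -/
def crossPolytopeFace (v : Fin (n + 1) → E) (σ : Fin (n + 1) → ℤˣ) : Set E :=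
  convexHull ℝ (Set.range fun i => σ i • v i)

/-- The boundary of the cross-polytope with vertices `± v i`, as the union of its facets. -/
def crossPolytopeBoundary (v : Fin (n + 1) → E) : Set E :=
  ⋃ σ, crossPolytopeFace v σ

theorem isCompact_crossPolytopeBoundary [TopologicalSpace E] [IsTopologicalAddGroup E]
    [ContinuousSMul ℝ E] : IsCompact (crossPolytopeBoundary v) :=
  isCompact_iUnion fun _ => (Set.finite_range _).isCompact_convexHull (𝕜 := ℝ)

theorem crossPolytopeBoundary_nonempty : (crossPolytopeBoundary v).Nonempty :=
  ⟨v 0, Set.mem_iUnion.2 ⟨1, subset_convexHull _ _ ⟨0, one_smul _ _⟩⟩⟩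

theorem neg_mem_crossPolytopeBoundary {x : E} (hx : x ∈ crossPolytopeBoundary v) :
    -x ∈ crossPolytopeBoundary v := by
  obtain ⟨σ, hσ⟩ := Set.mem_iUnion.1 hx
  refine Set.mem_iUnion.2 ⟨-σ, ?_⟩
  have : Set.range (fun i => (-σ) i • v i) = -Set.range fun i => σ i • v i := by
    simp [← Set.image_neg_eq_neg, ← Set.range_comp, Function.comp_def, Units.neg_smul]
  rw [crossPolytopeFace, this, convexHull_neg]
  exact Set.neg_mem_neg.2 hσ

theorem units_smul_mem_crossPolytopeBoundary {x : E} (ε : ℤˣ)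
    (hx : x ∈ crossPolytopeBoundary v) : ε • x ∈ crossPolytopeBoundary v := by
  obtain rfl | rfl := Int.units_eq_one_or ε
  · rwa [one_smul]
  · rw [Units.neg_smul, one_smul]
    exact neg_mem_crossPolytopeBoundary hx

theorem ne_zero_of_mem_crossPolytopeBoundary (hv : LinearIndependent ℝ v) {x : E}
    (hx : x ∈ crossPolytopeBoundary v) : x ≠ 0 := by
  obtain ⟨σ, hσ⟩ := Set.mem_iUnion.1 hx
  obtain ⟨g, hg⟩ := LinearMap.exists_leftInverse_of_injective _
    (linearIndependent_iff_ker.1 hv)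
  -- `φ` is constantly `1` on the facet that contains `x`.
  set φ : E →ₗ[ℝ] ℝ := Finsupp.linearCombination ℝ (fun i => ((σ i : ℤ) : ℝ)) ∘ₗ g
  have hφ (i) : φ (v i) = (σ i : ℤ) := by
    have := LinearMap.congr_fun hg (Finsupp.single i 1)
    rw [LinearMap.comp_apply, Finsupp.linearCombination_single, one_smul] at this
    simp [φ, this]
  have hφx : φ x = 1 := by
    have hconv : Convex ℝ (φ ⁻¹' {1}) := (convex_singleton 1).linear_preimage φ
    refine convexHull_min (Set.range_subset_iff.2 fun i => ?_) hconv hσ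
    obtain h | h := Int.units_eq_one_or (σ i) <;> simp [h, hφ, Units.smul_def]
  rintro rfl
  simp at hφx

/-- The realization of the vertex `(i, ε)` of the abstract cross-polytope as `ε • v i`; only indices
`i ≤ n` are meaningful, larger ones are reduced modulo `n + 1`. -/
def crossPolytopeVertex (v : Fin (n + 1) → E) (x : ℕ × ℤˣ) : E :=
  x.2 • v (Fin.ofNat (n + 1) x.1)

theorem mapDomain_crossPolytopeVertex_support_subset {k : ℕ} {m : ℕ × ℤˣ →₀ ℕ} (hk : k ≤ n)
    (hm : m ∈ crossPolytopeSimplices k) :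
    ∃ σ, ((m.mapDomain (crossPolytopeVertex v)).support : Set E) ⊆ crossPolytopeFace v σ := by
  classical
  obtain ⟨_, σ, hσ⟩ := hm
  refine ⟨fun i => σ i, fun y hy => ?_⟩
  obtain ⟨x, hx, rfl⟩ := Finset.mem_image.1 (Finsupp.mapDomain_support hy)
  obtain ⟨hle, hx⟩ := hσ x hx
  refine subset_convexHull _ _ ⟨Fin.ofNat (n + 1) x.1, ?_⟩
  simp [crossPolytopeVertex, hx, Nat.mod_eq_of_lt (show x.1 < n + 1 by omega)]

end CrossPolytope

theorem exists_small_antipodalTower {E : Type*} [SeminormedAddCommGroup E] [NormedSpace ℝ E] {n : ℕ}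
    (v : Fin (n + 1) → E) {δ : ℝ} (hδ : 0 < δ) :
    ∃ c, IsAntipodalTower Neg.neg n c ∧ ∀ k ≤ n,
      c k ∈ restrictSupport (ZMod 2) (smallSimplices (crossPolytopeBoundary v) (k + 1) δ) := by
  obtain ⟨D, hD⟩ :=
    Metric.isBounded_iff.1 (isCompact_crossPolytopeBoundary (v := v)).isBounded
  have htower := (isAntipodalTower_hemisphere n).map_rename (f := crossPolytopeVertex v)
    (σ := Neg.neg) (K := Set.univ)
    (fun x _ => by simp [crossPolytopeVertex, flipSign, Units.neg_smul]) (fun k _ => by simp)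
  have hmem (k) (hk : k ≤ n) : rename (crossPolytopeVertex v) (hemisphere k) ∈
      restrictSupport (ZMod 2) (⋃ σ, smallSimplices (crossPolytopeFace v σ) (k + 1) D) := by
    refine rename_mem_restrictSupport (fun m hm => ?_) (hemisphere_mem_restrictSupport k)
    obtain ⟨σ, hσ⟩ := mapDomain_crossPolytopeVertex_support_subset (v := v) hk hm
    have hK := hσ.trans (Set.subset_iUnion _ σ)
    exact Set.mem_iUnion.2
      ⟨σ, by rw [Finsupp.degree_mapDomain, hm.1], hσ, fun x hx y hy => hD (hK hx) (hK hy)⟩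
  obtain ⟨c, hc, hcK⟩ := htower.exists_smallSimplices (fun σ => convex_convexHull ℝ _) hmem hδ
  exact ⟨c, hc, fun k hk => restrictSupport_mono _ (Set.iUnion_subset fun σ =>
    smallSimplices_mono (Set.subset_iUnion _ σ) le_rfl) (hcK k hk)⟩

section Discrete

variable {E I : Type*} [SeminormedAddCommGroup E] [NormedSpace ℝ E] [LinearOrder I] {n : ℕ}

theorem exists_alternating_labels (v : Fin (n + 1) → E) {lab : E → I × ℤˣ} {δ : ℝ} (hδ : 0 < δ)
    (hanti : ∀ x ∈ crossPolytopeBoundary v, lab (-x) = flipSign (lab x))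
    (hcompl : ∀ x ∈ crossPolytopeBoundary v, ∀ y ∈ crossPolytopeBoundary v, dist x y ≤ δ →
      lab x ≠ flipSign (lab y)) :
    ∃ ε : ℤˣ, ∃ x : Fin (n + 1) → E, (∀ j, x j ∈ crossPolytopeBoundary v) ∧
      (∀ i j, dist (x i) (x j) ≤ δ) ∧ StrictMono (fun j => (lab (x j)).1) ∧
      ∀ j, (lab (x j)).2 = (-1) ^ (j : ℕ) * ε := by
  classical
  set K := crossPolytopeBoundary v
  obtain ⟨c, hc, hcK⟩ := exists_small_antipodalTower v hδ
  have htower := hc.map_rename hanti fun k hk =>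
    restrictSupport_mono _ (fun s hs => hs.2.1) (hcK k hk.le)
  have hfree (k) (hk : k ≤ n) : rename lab (c k) ∈
      restrictSupport (ZMod 2) (complementaryFree I) :=
    rename_mem_restrictSupport (fun s => mapDomain_mem_complementaryFree hcompl) (hcK k hk)
  obtain ⟨_, ⟨s, hs, rfl⟩, ε, halt⟩ := htower.exists_isAlternating hfree
    (rename_mem_restrictSupport (fun s => Set.mem_image_of_mem _) (hcK n le_rfl))
  obtain ⟨l, hmono, hl⟩ := halt.exists_strictMono (by rw [Finsupp.degree_mapDomain, hs.1])
  have hpre (j) : ∃ x ∈ s.support, lab x = l j :=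
    Finset.mem_image.1 (Finsupp.mapDomain_support (hl j).1)
  choose x hx hxl using hpre
  refine ⟨ε, x, fun j => hs.2.1 (hx j), fun i j => hs.2.2 _ (hx i) _ (hx j), ?_, fun j => ?_⟩
  · simp only [hxl]
    exact hmono
  · rw [hxl, (hl j).2]

end Discrete

theorem eventually_forall_lt_dist {X : Type*} [PseudoMetricSpace X] {K F : Set X}
    (hK : IsCompact K) (hF : IsClosed F) (hKF : Disjoint K F) :
    ∀ᶠ δ in 𝓝[>] (0 : ℝ), ∀ x ∈ K, ∀ y ∈ F, δ < dist x y := by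
  obtain ⟨r, hr, hlt⟩ := Metric.exists_pos_forall_lt_edist hK hF hKF
  filter_upwards [Ioo_mem_nhdsGT (NNReal.coe_pos.2 hr)] with δ hδ x hx y hy
  have := hlt x hx y hy
  rw [edist_nndist, ENNReal.coe_lt_coe] at this
  exact hδ.2.trans this

theorem eventually_exists_lt_dist_of_inter_iInter_eq_empty {X J : Type*} [PseudoMetricSpace X]
    [Nonempty J] {K : Set X} {G : J → Set X} (hK : IsCompact K) (hG : ∀ j, IsClosed (G j))
    (hempty : K ∩ ⋂ j, G j = ∅) :
    ∀ᶠ δ in 𝓝[>] (0 : ℝ), ∀ x : J → X, (∀ j, x j ∈ K ∩ G j) → ∃ i j, δ < dist (x i) (x j) := by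
  have hcover : K ⊆ ⋃ j, (G j)ᶜ := by
    rw [← Set.compl_iInter]
    exact Set.disjoint_iff_inter_eq_empty.2 hempty |>.subset_compl_right
  obtain ⟨r, hr, hball⟩ := lebesgue_number_lemma_of_metric hK (fun j => (hG j).isOpen_compl) hcover
  filter_upwards [Ioo_mem_nhdsGT hr] with δ hδ x hx
  obtain ⟨i⟩ := ‹Nonempty J›
  obtain ⟨j, hj⟩ := hball (x i) (hx i).1
  refine ⟨j, i, hδ.2.trans_le (not_lt.1 fun hlt => hj (Metric.mem_ball.2 hlt) (hx j).2)⟩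

section Labelling

variable {E I : Type*} [AddCommGroup E] {B : I → Set E} {K : Set E}

theorem exists_antipodal_labelling [Nonempty I] (hdisj : ∀ i, B i ∩ -B i = ∅)
    (hcover : K ⊆ ⋃ i, (B i ∪ -B i)) :
    ∃ lab : E → I × ℤˣ, ∀ x ∈ K,
      (lab x).2 • x ∈ B (lab x).1 ∧ lab (-x) = flipSign (lab x) := by
  classical
  -- `i x` is chosen from a predicate that is symmetric in `x` and `-x`, so that `i (-x) = i x`.
  set i : E → I := fun x => Classical.epsilon fun i => x ∈ B i ∪ -B i
  refine ⟨fun x => (i x, if x ∈ B (i x) then 1 else -1), fun x hx => ?_⟩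
  have hi : x ∈ B (i x) ∨ -x ∈ B (i x) :=
    Classical.epsilon_spec (p := fun i => x ∈ B i ∪ -B i) (Set.mem_iUnion.1 (hcover hx))
  have hineg : i (-x) = i x := by simp [i, or_comm]
  have hnot : x ∈ B (i x) → -x ∉ B (i x) := fun h h' =>
    Set.eq_empty_iff_forall_notMem.1 (hdisj (i x)) x ⟨h, h'⟩
  by_cases h : x ∈ B (i x)
  · simp [flipSign, hineg, h, hnot h]
  · simp [flipSign, hineg, h, hi.resolve_left h, Units.neg_smul]

end Labelling

theorem dist_units_smul {E : Type*} [SeminormedAddCommGroup E] (ε : ℤˣ) (x y : E) :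
    dist (ε • x) (ε • y) = dist x y := by
  obtain rfl | rfl := Int.units_eq_one_or ε <;> simp [Units.neg_smul]

section CrossPolytopeFan

variable {E I : Type*} [SeminormedAddCommGroup E] [NormedSpace ℝ E] [LinearOrder I] {n : ℕ}
  {B : I → Set E} {v : Fin (n + 1) → E}

theorem exists_strictMono_alternating_small (hdisj : ∀ i, B i ∩ -B i = ∅)
    (hcover : crossPolytopeBoundary v ⊆ ⋃ i, (B i ∪ -B i)) {δ : ℝ} (hδ : 0 < δ)
    (hfar : ∀ i, ∀ x ∈ crossPolytopeBoundary v ∩ B i, ∀ y ∈ -B i, δ < dist x y) :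
    ∃ ι : Fin (n + 1) → I, StrictMono ι ∧ ∃ x : Fin (n + 1) → E,
      (∀ j, x j ∈ crossPolytopeBoundary v ∧ (-1 : ℤˣ) ^ (j + 1 : ℕ) • x j ∈ B (ι j)) ∧
      ∀ i j, dist (x i) (x j) ≤ δ := by
  obtain ⟨i₀, -⟩ := Set.mem_iUnion.1 (hcover crossPolytopeBoundary_nonempty.choose_spec)
  have : Nonempty I := ⟨i₀⟩
  obtain ⟨lab, hlab⟩ := exists_antipodal_labelling hdisj hcover
  have hcompl : ∀ x ∈ crossPolytopeBoundary v, ∀ y ∈ crossPolytopeBoundary v, dist x y ≤ δ →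
      lab x ≠ flipSign (lab y) := by
    intro x hx y hy hxy h
    have hneg : (lab y).2 • x ∈ -B (lab y).1 := by
      have := (hlab x hx).1
      rwa [h, flipSign, Units.neg_smul] at this
    have := hfar _ _ ⟨units_smul_mem_crossPolytopeBoundary _ hy, (hlab y hy).1⟩ _ hneg
    rw [dist_units_smul, dist_comm] at this
    exact this.not_ge hxy
  obtain ⟨ε, x, hxK, hdist, hmono, hε⟩ :=
    exists_alternating_labels v hδ (fun x hx => (hlab x hx).2) hcompl
  refine ⟨_, hmono, fun j => -ε • x j, fun j => ⟨?_, ?_⟩, fun i j => ?_⟩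
  · exact units_smul_mem_crossPolytopeBoundary _ (hxK j)
  · have hmem := (hlab _ (hxK j)).1
    rw [smul_smul, pow_succ, mul_assoc, neg_one_mul, neg_neg]
    rwa [hε] at hmem
  · rw [dist_units_smul]
    exact hdist i j

theorem exists_mem_crossPolytopeBoundary_alternating [Finite I] (hclosed : ∀ i, IsClosed (B i))
    (hdisj : ∀ i, B i ∩ -B i = ∅) (hcover : crossPolytopeBoundary v ⊆ ⋃ i, (B i ∪ -B i)) :
    ∃ ι : Fin (n + 1) → I, StrictMono ι ∧ ∃ x ∈ crossPolytopeBoundary v,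
      ∀ j, (-1 : ℤˣ) ^ (j + 1 : ℕ) • x ∈ B (ι j) := by
  by_contra! hnone
  have hfar : ∀ᶠ δ in 𝓝[>] (0 : ℝ), ∀ i, ∀ x ∈ crossPolytopeBoundary v ∩ B i, ∀ y ∈ -B i,
      δ < dist x y := by
    exact eventually_all.2 fun i => eventually_forall_lt_dist
      (isCompact_crossPolytopeBoundary.inter_right (hclosed i)) (hclosed i).neg
      ((Set.disjoint_iff_inter_eq_empty.2 (hdisj i)).mono_left Set.inter_subset_right)
  have hspread : ∀ᶠ δ in 𝓝[>] (0 : ℝ), ∀ ι : Fin (n + 1) → I, StrictMono ι →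
      ∀ x : Fin (n + 1) → E,
        (∀ j, x j ∈ crossPolytopeBoundary v ∩ {x | (-1 : ℤˣ) ^ (j + 1 : ℕ) • x ∈ B (ι j)}) →
          ∃ i j, δ < dist (x i) (x j) := by
    refine eventually_all.2 fun ι => eventually_imp_distrib_left.2 fun hι => ?_
    refine eventually_exists_lt_dist_of_inter_iInter_eq_empty isCompact_crossPolytopeBoundary
      (fun j => (hclosed _).preimage (continuous_const_smul _)) ?_
    refine Set.eq_empty_of_forall_notMem fun x ⟨hxK, hx⟩ => ?_
    obtain ⟨j, hj⟩ := hnone ι hι x hxK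
    exact hj (Set.mem_iInter.1 hx j)
  obtain ⟨δ, ⟨hfarδ, hspreadδ⟩, hδ⟩ := ((hfar.and hspread).and self_mem_nhdsWithin).exists
  obtain ⟨ι, hι, x, hx, hdist⟩ := exists_strictMono_alternating_small hdisj hcover hδ hfarδ
  obtain ⟨i, j, hij⟩ := hspreadδ ι hι x hx
  exact hij.not_ge (hdist i j)

end CrossPolytopeFan

theorem continuousOn_normalize {E : Type*} [NormedAddCommGroup E] [NormedSpace ℝ E] :
    ContinuousOn (normalize : E → E) {0}ᶜ :=
  (continuousOn_id.norm.inv₀ fun _ hx => norm_ne_zero_iff.2 hx).smul continuousOn_id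

theorem stmt2_general {E I : Type*} [NormedAddCommGroup E] [NormedSpace ℝ E] [LinearOrder I]
    [Finite I] {d : ℕ} (hd : (d + 1 : ℕ) ≤ Module.rank ℝ E) (A : I → Set E)
    (hclosed : ∀ i, IsClosed (A i)) (hdisj : ∀ i, A i ∩ -A i = ∅)
    (hcover : Metric.sphere (0 : E) 1 ⊆ ⋃ i, (A i ∪ -A i)) :
    ∃ ι : Fin (d + 1) → I, StrictMono ι ∧
      (Metric.sphere (0 : E) 1 ∩ ⋂ j : Fin (d + 1),
        if (j : ℕ) % 2 = 0 then -A (ι j) else A (ι j)).Nonempty := by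
  obtain ⟨v, hv⟩ := Module.le_rank_iff.1 hd
  set K := crossPolytopeBoundary v
  have hne {x : E} : x ∈ K → x ≠ 0 := ne_zero_of_mem_crossPolytopeBoundary hv
  have hsphere {x : E} (hx : x ∈ K) : normalize x ∈ Metric.sphere (0 : E) 1 :=
    mem_sphere_zero_iff_norm.2 (norm_normalize_eq_one_iff.2 (hne hx))
  set B : I → Set E := fun i => K ∩ normalize ⁻¹' A i
  have hBclosed (i) : IsClosed (B i) := (continuousOn_normalize.mono fun _ => hne)
    |>.preimage_isClosed_of_isClosed isCompact_crossPolytopeBoundary.isClosed (hclosed i)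
  have hBdisj (i) : B i ∩ -B i = ∅ := Set.eq_empty_of_forall_notMem fun x hx =>
    Set.eq_empty_iff_forall_notMem.1 (hdisj i) (normalize x)
      ⟨hx.1.2, Set.mem_neg.2 (normalize_neg x ▸ hx.2.2)⟩
  have hBcover : K ⊆ ⋃ i, (B i ∪ -B i) := fun x hx => by
    obtain ⟨i, hi⟩ := Set.mem_iUnion.1 (hcover (hsphere hx))
    refine Set.mem_iUnion.2 ⟨i, hi.imp (⟨hx, ·⟩) fun h => ⟨neg_mem_crossPolytopeBoundary hx, ?_⟩⟩
    rwa [Set.mem_preimage, normalize_neg]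
  obtain ⟨ι, hι, x, hxK, hx⟩ := exists_mem_crossPolytopeBoundary_alternating hBclosed hBdisj hBcover
  refine ⟨ι, hι, normalize x, hsphere hxK, Set.mem_iInter.2 fun j => ?_⟩
  have hj : normalize ((-1 : ℤˣ) ^ (j + 1 : ℕ) • x) ∈ A (ι j) := (hx j).2
  split_ifs with heven
  · rwa [pow_succ, (Nat.even_iff.2 heven).neg_one_pow, one_mul, Units.neg_smul, one_smul,
      normalize_neg] at hj
  · rwa [pow_succ, (Nat.not_even_iff_odd.1 (mt Nat.even_iff.1 heven)).neg_one_pow, neg_one_mul,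
      neg_neg, one_smul] at hj

/-- Fan's theorem: for closed sets `A₁,…,A_m ⊆ S^d` with `A_i ∩ (-A_i) = ∅` that together
with their antipodes cover `S^d`, there are indices `i₁ < ⋯ < i_{d+1}` with
`-A_{i₁} ∩ A_{i₂} ∩ -A_{i₃} ∩ ⋯ ≠ ∅` (alternating signs, starting with `-`). -/
theorem stmt2 (d m : ℕ)
    (A : Fin m → Set (EuclideanSpace ℝ (Fin (d + 1))))
    (hclosed : ∀ i, IsClosed (A i))
    (hsub : ∀ i, A i ⊆ Metric.sphere (0 : EuclideanSpace ℝ (Fin (d + 1))) 1)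
    (hdisj : ∀ i, A i ∩ (-A i) = ∅)
    (hcover : Metric.sphere (0 : EuclideanSpace ℝ (Fin (d + 1))) 1 ⊆ ⋃ i, (A i ∪ -A i)) :
    ∃ ι : Fin (d + 1) → Fin m, StrictMono ι ∧
      (⋂ j : Fin (d + 1),
        (if (j : ℕ) % 2 = 0 then -A (ι j) else A (ι j))).Nonempty := by
  obtain ⟨ι, hι, hne⟩ := stmt2_general (d := d) (by simp [← Module.finrank_eq_rank]) A hclosed
    hdisj hcover
  exact ⟨ι, hι, hne.mono Set.inter_subset_right⟩
end

section
/- Let A₁, ..., A_{d+1} ⊂ S^d be closed sets such that A_i ∩ (-A_i) = ∅ for all i ∈ [d+1] and ⋃_i A_i ∪ ⋃_i (-A_i) = S^d. Then ⋂_{i=1}^{d+1} A_i ≠ ∅. -/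
open Pointwise

/-!
An odd map `S^n → ℝ^n` has a zero (Borsuk–Ulam): the signs of its coordinates are 0-cochains
modulo 2 with `θ i (-x) = θ i x + 1`, and the coboundary of `θ 0 ∪ δ(θ 1) ∪ ⋯ ∪ δ(θ (n - 1))` is
`δ(θ 0) ∪ ⋯ ∪ δ(θ (n - 1))`. The boundary of an upper hemisphere is a hemisphere of one dimension
less plus its antipode, so by induction on the dimension `δ(θ 0) ∪ ⋯ ∪ δ(θ (n - 1))` takes the
value 1 on the upper hemisphere of every antipodally symmetric subdivision. Hence arbitrarily small
simplices see a sign change in every coordinate, and compactness yields a zero.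

For the covering theorem, let `h i` be odd, continuous and equal to 1 exactly on `A i`. By
Borsuk–Ulam for the differences `h i - h 0`, all the `h i` agree at some point `x`; their common
value is `±1` because `x` lies in some `A j` or `-A j`, so `x` or `-x` lies in every `A i`.
-/

namespace BorsukUlam

open Finsupp Set

noncomputable section

section Chain

variable {E : Type*} {n : ℕ}

/-- Ordered simplicial chains modulo 2 on a set `E`. The index `n` is the number of vertices of a
simplex, one more than its dimension, and degenerate simplices are not quotiented out. -/
abbrev Chain (E : Type*) (n : ℕ) : Type _ := (Fin n → E) →₀ ZMod 2

/-- The chains all of whose simplices lie in `S`. -/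
abbrev chainsIn (S : Set (Fin n → E)) : Submodule (ZMod 2) (Chain E n) :=
  supported (ZMod 2) (ZMod 2) S

theorem map_mem_of_mem_chainsIn {M : Type*} [AddCommGroup M] [Module (ZMod 2) M]
    {S : Set (Fin n → E)} {T : Chain E n →ₗ[ZMod 2] M} {Q : Submodule (ZMod 2) M}
    (h : ∀ s ∈ S, T (single s 1) ∈ Q) {c : Chain E n} (hc : c ∈ chainsIn S) : T c ∈ Q := by
  suffices chainsIn S ≤ Q.comap T from this hc
  rw [chainsIn, supported_eq_span_single, Submodule.span_le]
  rintro _ ⟨s, hs, rfl⟩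
  exact h s hs

theorem map_eq_of_mem_chainsIn {M : Type*} [AddCommGroup M] [Module (ZMod 2) M]
    {S : Set (Fin n → E)} {T T' : Chain E n →ₗ[ZMod 2] M}
    (h : ∀ s ∈ S, T (single s 1) = T' (single s 1)) {c : Chain E n} (hc : c ∈ chainsIn S) :
    T c = T' c :=
  map_mem_of_mem_chainsIn (T := LinearMap.id) (Q := LinearMap.eqLocus T T') h hc

/-- The join of a chain with the point `p`, which becomes the first vertex. -/
def cone (p : E) : Chain E n →ₗ[ZMod 2] Chain E (n + 1) :=
  lmapDomain _ _ fun s => Fin.cons p s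

@[simp]
theorem cone_single (p : E) (s : Fin n → E) (a : ZMod 2) :
    cone p (single s a) = single (Fin.cons p s) a := by
  simp [cone, mapDomain_single]

/-- The simplicial boundary: the sum of the facets of each simplex. -/
def boundary : Chain E (n + 1) →ₗ[ZMod 2] Chain E n :=
  linearCombination (ZMod 2) fun s => ∑ i : Fin (n + 1), single (s ∘ i.succAbove) 1

@[simp]
theorem boundary_single (s : Fin (n + 1) → E) :
    boundary (single s 1) = ∑ i : Fin (n + 1), single (s ∘ i.succAbove) 1 := by
  simp [boundary]

theorem boundary_cone_zero (p : E) (c : Chain E 0) : boundary (cone p c) = c := by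
  induction c using Finsupp.induction_linear with
  | zero => simp
  | add c c' hc hc' => simp only [map_add, hc, hc']
  | single s a =>
    rw [← mul_one a, ← smul_eq_mul, ← smul_single, map_smul, map_smul, cone_single, boundary_single,
      Fin.sum_univ_one, Subsingleton.elim (_ ∘ _) s]

theorem boundary_cone (p : E) (c : Chain E (n + 1)) :
    boundary (cone p c) = c + cone p (boundary c) := by
  suffices boundary ∘ₗ cone p = LinearMap.id + cone p ∘ₗ boundary (n := n) from
    DFunLike.congr_fun this c
  ext s : 2
  have hsucc (i : Fin (n + 1)) : (Fin.cons p s : Fin (n + 2) → E) ∘ i.succ.succAbove =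
      Fin.cons p (s ∘ i.succAbove) := Fin.cons_comp_succ_succAbove ..
  simp [Fin.sum_univ_succ (n := n + 1), hsucc]

theorem chain_hom_ext_cone {M : Type*} [AddCommGroup M] [Module (ZMod 2) M]
    {T T' : Chain E (n + 1) →ₗ[ZMod 2] M} (h : ∀ p c, T (cone p c) = T' (cone p c)) : T = T' := by
  ext s : 2
  simpa using h (s 0) (single (Fin.tail s) 1)

theorem boundary_boundary (c : Chain E (n + 2)) : boundary (boundary c) = 0 := by
  suffices boundary ∘ₗ boundary (n := n + 1) = (0 : Chain E (n + 2) →ₗ[ZMod 2] Chain E n) from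
    DFunLike.congr_fun this c
  induction n with
  | zero =>
    refine chain_hom_ext_cone fun p c => ?_
    simp [boundary_cone, boundary_cone_zero, ZModModule.add_self]
  | succ n ih =>
    refine chain_hom_ext_cone fun p c => ?_
    have hc : boundary (boundary c) = 0 := DFunLike.congr_fun (ih c) c
    simp [boundary_cone, hc, ZModModule.add_self]

section Antipode

variable [Neg E]

/-- The map induced on chains by negation of the vertices. -/
def antipode : Chain E n →ₗ[ZMod 2] Chain E n :=
  lmapDomain _ _ Neg.neg

@[simp]
theorem antipode_single (s : Fin n → E) (a : ZMod 2) :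
    antipode (single s a) = single (-s) a := by
  simp [antipode, mapDomain_single]

theorem antipode_cone (p : E) (c : Chain E n) : antipode (cone p c) = cone (-p) (antipode c) := by
  suffices antipode ∘ₗ cone p = cone (-p) ∘ₗ antipode (n := n) from DFunLike.congr_fun this c
  ext s : 2
  have : -(Fin.cons p s : Fin (n + 1) → E) = Fin.cons (-p) (-s) := by
    ext i; cases i using Fin.cases <;> rfl
  simp [this]

theorem antipode_boundary (c : Chain E (n + 1)) :
    antipode (boundary c) = boundary (antipode c) := by
  suffices antipode ∘ₗ boundary = boundary ∘ₗ (antipode (n := n + 1) (E := E)) from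
    DFunLike.congr_fun this c
  ext s : 2
  simp [Pi.neg_comp]

end Antipode

theorem antipode_antipode [InvolutiveNeg E] (c : Chain E n) : antipode (antipode c) = c := by
  suffices antipode ∘ₗ antipode = (LinearMap.id : Chain E n →ₗ[ZMod 2] _) from
    DFunLike.congr_fun this c
  ext s : 2
  simp

end Chain
section Subdivision

open Metric

variable {E : Type*} {n : ℕ}

/-- The centroid of the vertices of `s`. -/
def barycenter [AddCommGroup E] [Module ℝ E] (s : Fin n → E) : E :=
  (n : ℝ)⁻¹ • ∑ i, s i

theorem barycenter_neg [AddCommGroup E] [Module ℝ E] (s : Fin n → E) :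
    barycenter (-s) = -barycenter s := by
  simp [barycenter]

theorem barycenter_mem_convexHull [AddCommGroup E] [Module ℝ E] (s : Fin (n + 1) → E) :
    barycenter s ∈ convexHull ℝ (range s) := by
  rw [barycenter, Finset.smul_sum]
  refine (convex_convexHull ℝ _).sum_mem (fun _ _ => by positivity) ?_
    fun i _ => subset_convexHull ℝ _ (mem_range_self i)
  simp [field]

/-- Barycentric subdivision: a simplex is sent to the cone from its barycenter over the subdivision
of its boundary. -/
def subdivide [AddCommGroup E] [Module ℝ E] : ∀ n : ℕ, Chain E n →ₗ[ZMod 2] Chain E n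
  | 0 => LinearMap.id
  | n + 1 => linearCombination (ZMod 2) fun s =>
      cone (barycenter s) (subdivide n (boundary (single s 1)))

theorem subdivide_succ_single [AddCommGroup E] [Module ℝ E] (s : Fin (n + 1) → E) :
    subdivide (n + 1) (single s 1) =
      cone (barycenter s) (subdivide n (boundary (single s 1))) := by
  simp only [subdivide, linearCombination_single, one_smul]

theorem boundary_subdivide [AddCommGroup E] [Module ℝ E] (c : Chain E (n + 1)) :
    boundary (subdivide (n + 1) c) = subdivide n (boundary c) := by
  suffices boundary ∘ₗ subdivide (n + 1) = subdivide n ∘ₗ boundary (E := E) from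
    DFunLike.congr_fun this c
  induction n with
  | zero =>
    ext s : 2
    simp only [LinearMap.comp_apply, lsingle_apply, subdivide_succ_single, boundary_cone_zero]
  | succ n ih =>
    ext s : 2
    have hface : boundary (subdivide (n + 1) (boundary (single s 1))) = 0 := by
      have := DFunLike.congr_fun (ih 0) (boundary (single s 1))
      simpa only [LinearMap.comp_apply, boundary_boundary, map_zero] using this
    simp only [LinearMap.comp_apply, lsingle_apply, subdivide_succ_single (n := n + 1),
      boundary_cone, hface, map_zero, add_zero]

theorem antipode_subdivide [AddCommGroup E] [Module ℝ E] (c : Chain E n) :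
    antipode (subdivide n c) = subdivide n (antipode c) := by
  suffices antipode ∘ₗ subdivide n = subdivide n ∘ₗ antipode (E := E) from
    DFunLike.congr_fun this c
  induction n with
  | zero => rfl
  | succ n ih =>
    ext s : 2
    have hface (x : Chain E n) : antipode (subdivide n x) = subdivide n (antipode x) :=
      DFunLike.congr_fun (ih 0) x
    simp only [LinearMap.comp_apply, lsingle_apply, antipode_single, subdivide_succ_single,
      antipode_cone, hface, antipode_boundary, barycenter_neg]

variable [NormedAddCommGroup E] [NormedSpace ℝ E]

theorem dist_barycenter_le {s : Fin (n + 1) → E} {r : ℝ} {i : Fin (n + 1)}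
    (h : ∀ j, dist (s i) (s j) ≤ r) : dist (s i) (barycenter s) ≤ n / (n + 1) * r := by
  have hsub : s i - barycenter s = (n + 1 : ℝ)⁻¹ • ∑ j, (s i - s j) := by
    have hn : (n + 1 : ℝ) ≠ 0 := by positivity
    simp [barycenter, smul_sub, ← Nat.cast_smul_eq_nsmul ℝ, smul_smul, hn]
  have hsum : ‖∑ j, (s i - s j)‖ ≤ n * r := by
    rw [← Finset.add_sum_erase _ _ (Finset.mem_univ i), sub_self, zero_add]
    simpa using norm_sum_le_of_le (Finset.univ.erase i) fun j _ =>
      (dist_eq_norm (s i) (s j)).symm.trans_le (h j)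
  calc dist (s i) (barycenter s) = (n + 1 : ℝ)⁻¹ * ‖∑ j, (s i - s j)‖ := by
        rw [dist_eq_norm, hsub, norm_smul, Real.norm_of_nonneg (by positivity)]
    _ ≤ (n + 1 : ℝ)⁻¹ * (n * r) := by gcongr
    _ = n / (n + 1) * r := by ring

theorem diam_insert_le {X : Type*} [PseudoMetricSpace X] {S : Set X} {p : X} {r : ℝ}
    (hS : Bornology.IsBounded S) (hr : 0 ≤ r) (hdiam : diam S ≤ r) (hball : S ⊆ closedBall p r) :
    diam (insert p S) ≤ r := by
  refine diam_le_of_forall_dist_le hr ?_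
  rintro x (rfl | hx) y (rfl | hy)
  · simpa
  · exact mem_closedBall'.1 (hball hy)
  · exact hball hx
  · exact (dist_le_diam_of_mem hS hx hy).trans hdiam

theorem convexHull_range_subset_closedBall_barycenter (s : Fin (n + 1) → E) :
    convexHull ℝ (range s) ⊆ closedBall (barycenter s) (n / (n + 1) * diam (range s)) := by
  refine convexHull_min ?_ (convex_closedBall _ _)
  rintro _ ⟨i, rfl⟩
  exact dist_barycenter_le fun j => dist_le_diam_of_mem (finite_range s).isBounded
    (mem_range_self i) (mem_range_self j)

theorem subdivide_single_mem (s : Fin n → E) :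
    subdivide n (single s 1) ∈ chainsIn {t | range t ⊆ convexHull ℝ (range s) ∧
      diam (range t) ≤ n / (n + 1) * diam (range s)} := by
  induction n with
  | zero =>
    exact single_mem_supported _ _ ⟨subset_convexHull ℝ _, by simp [range_eq_empty s]⟩
  | succ n ih =>
    rw [subdivide_succ_single, boundary_single, map_sum, map_sum]
    refine Submodule.sum_mem _ fun i _ => map_mem_of_mem_chainsIn ?_ (ih _)
    rintro t ⟨htconv, htdiam⟩
    have hface : range (s ∘ i.succAbove) ⊆ range s := range_comp_subset_range _ _
    have hconv : range t ⊆ convexHull ℝ (range s) := htconv.trans (convexHull_mono hface)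
    have hratio : (n : ℝ) / (n + 1) ≤ (n + 1 : ℕ) / ((n + 1 : ℕ) + 1) := by
      rw [div_le_div_iff₀ (by positivity) (by positivity)]
      push_cast
      nlinarith
    rw [cone_single]
    refine single_mem_supported _ _ ?_
    rw [mem_ofPred_eq, Fin.range_cons]
    refine ⟨insert_subset (barycenter_mem_convexHull s) hconv,
      diam_insert_le (finite_range t).isBounded (by positivity) (htdiam.trans ?_)
        (hconv.trans <| (convexHull_range_subset_closedBall_barycenter s).trans <|
          closedBall_subset_closedBall ?_)⟩
    · gcongr
      exact diam_mono hface (finite_range s).isBounded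
    · gcongr

theorem subdivide_mem_chainsIn {X : Set E} {r : ℝ} {c : Chain E n}
    (hc : c ∈ chainsIn {s | convexHull ℝ (range s) ⊆ X ∧ diam (range s) ≤ r}) :
    subdivide n c ∈
      chainsIn {s | convexHull ℝ (range s) ⊆ X ∧ diam (range s) ≤ n / (n + 1) * r} := by
  refine map_mem_of_mem_chainsIn (fun s hs => ?_) hc
  obtain ⟨hsX, hsr⟩ := hs
  refine supported_mono ?_ (subdivide_single_mem s)
  rintro t ⟨htconv, htdiam⟩
  exact ⟨(convexHull_min htconv (convex_convexHull ℝ _)).trans hsX, htdiam.trans (by gcongr)⟩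

theorem iterate_subdivide_mem_chainsIn {X : Set E} {r : ℝ} {c : Chain E n} (m : ℕ)
    (hc : c ∈ chainsIn {s | convexHull ℝ (range s) ⊆ X ∧ diam (range s) ≤ r}) :
    (subdivide n)^[m] c ∈
      chainsIn {s | convexHull ℝ (range s) ⊆ X ∧ diam (range s) ≤ (n / (n + 1)) ^ m * r} := by
  induction m with
  | zero => simpa using hc
  | succ m ih =>
    rw [Function.iterate_succ_apply', pow_succ', mul_assoc]
    exact subdivide_mem_chainsIn ih

end Subdivision

section Tower

variable {E : Type*}

/-- A sequence of chains in which `c k` plays the role of the upper half of a `k`-sphere: its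
boundary is a `(k - 1)`-sphere, cut into the hemisphere `c (k - 1)` and its antipode. In dimension
zero the boundary is the augmentation, so that `c 0` has an odd number of points. -/
structure IsHemisphereTower [Neg E] (c : ∀ k : ℕ, Chain E (k + 1)) : Prop where
  boundary_zero : boundary (c 0) = single ![] 1
  boundary_succ (k : ℕ) : boundary (c (k + 1)) = c k + antipode (c k)

theorem IsHemisphereTower.subdivide [AddCommGroup E] [Module ℝ E] {c : ∀ k : ℕ, Chain E (k + 1)}
    (hc : IsHemisphereTower c) : IsHemisphereTower fun k => subdivide (k + 1) (c k) where
  boundary_zero := by rw [boundary_subdivide, hc.boundary_zero]; rfl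
  boundary_succ k := by rw [boundary_subdivide, hc.boundary_succ, map_add, antipode_subdivide]

theorem IsHemisphereTower.iterate_subdivide [AddCommGroup E] [Module ℝ E]
    {c : ∀ k : ℕ, Chain E (k + 1)} (hc : IsHemisphereTower c) (m : ℕ) :
    IsHemisphereTower fun k => (BorsukUlam.subdivide (k + 1))^[m] (c k) := by
  induction m with
  | zero => exact hc
  | succ m ih => simpa only [Function.iterate_succ_apply'] using ih.subdivide

/-- The upper hemisphere of the boundary of the cross-polytope with vertices `± e 0, …, ± e k`,
triangulated as the cone from `e k` over the whole boundary of the previous cross-polytope. -/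
def octahedralHemisphere [Neg E] (e : ℕ → E) : ∀ k : ℕ, Chain E (k + 1)
  | 0 => single (fun _ => e 0) 1
  | k + 1 => cone (e (k + 1)) (octahedralHemisphere e k + antipode (octahedralHemisphere e k))

theorem boundary_octahedralHemisphere_zero [Neg E] (e : ℕ → E) :
    boundary (octahedralHemisphere e 0) = single ![] 1 := by
  rw [octahedralHemisphere, boundary_single, Fin.sum_univ_one]
  exact congrArg (single · 1) (Subsingleton.elim _ _)

theorem boundary_octahedralHemisphere_add_antipode [InvolutiveNeg E] (e : ℕ → E) (k : ℕ) :
    boundary (octahedralHemisphere e k + antipode (octahedralHemisphere e k)) = 0 := by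
  rw [map_add, ← antipode_boundary]
  induction k with
  | zero =>
    simp [boundary_octahedralHemisphere_zero, Subsingleton.elim (-![]) (![] : Fin 0 → E),
      ZModModule.add_self]
  | succ k ih =>
    rw [octahedralHemisphere, boundary_cone, map_add, ← antipode_boundary, ih, map_zero, add_zero,
      map_add, antipode_antipode, add_comm (antipode _), ZModModule.add_self]

theorem isHemisphereTower_octahedralHemisphere [InvolutiveNeg E] (e : ℕ → E) :
    IsHemisphereTower (octahedralHemisphere e) where
  boundary_zero := boundary_octahedralHemisphere_zero e
  boundary_succ k := by
    rw [octahedralHemisphere, boundary_cone, boundary_octahedralHemisphere_add_antipode, map_zero,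
      add_zero]

theorem octahedralHemisphere_mem_chainsIn [AddCommGroup E] (e : ℕ → E) (k : ℕ) :
    octahedralHemisphere e k ∈
      chainsIn {s | ∃ ε : ℕ → ℤˣ, ∀ i, ∃ j ≤ k, s i = ε j • e j} := by
  induction k with
  | zero => exact single_mem_supported _ _ ⟨1, fun i => ⟨0, le_rfl, by simp⟩⟩
  | succ k ih =>
    refine map_mem_of_mem_chainsIn (T := cone (e (k + 1))) (fun s hs => ?_)
      (add_mem ih (map_mem_of_mem_chainsIn (T := antipode) (fun s hs => ?_) ih))
    · obtain ⟨ε, hε⟩ := hs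
      rw [cone_single]
      refine single_mem_supported _ _ ⟨Function.update ε (k + 1) 1, Fin.cases ?_ fun i => ?_⟩
      · exact ⟨k + 1, le_rfl, by simp⟩
      · obtain ⟨j, hj, hs⟩ := hε i
        exact ⟨j, hj.trans k.le_succ, by
          rw [Function.update_of_ne (by omega), Fin.cons_succ, hs]⟩
    · obtain ⟨ε, hε⟩ := hs
      rw [antipode_single]
      refine single_mem_supported _ _ ⟨-ε, fun i => ?_⟩
      obtain ⟨j, hj, hs⟩ := hε i
      exact ⟨j, hj, by simp [hs]⟩

end Tower

section OctahedralSphere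

variable {E : Type*}

/-- The boundary of the cross-polytope with vertices `± e 0, …, ± e n`, as the union of its facets:
a compact model of the `n`-sphere when `e 0, …, e n` are linearly independent. -/
def octahedralSphere [AddCommGroup E] [Module ℝ E] (e : ℕ → E) (n : ℕ) : Set E :=
  ⋃ ε : Fin (n + 1) → ℤˣ, convexHull ℝ (range fun i => ε i • e i)

theorem isCompact_octahedralSphere [AddCommGroup E] [Module ℝ E] [TopologicalSpace E]
    [IsTopologicalAddGroup E] [ContinuousSMul ℝ E] (e : ℕ → E) (n : ℕ) :
    IsCompact (octahedralSphere e n) :=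
  isCompact_iUnion fun _ => (Set.finite_range _).isCompact_convexHull ℝ

theorem zero_notMem_convexHull_of_linearIndependent {ι : Type*} [AddCommGroup E] [Module ℝ E]
    {v : ι → E} (hv : LinearIndependent ℝ v) : (0 : E) ∉ convexHull ℝ (range v) := by
  rw [convexHull_range_eq_exists_affineCombination]
  rintro ⟨s, w, -, hw, h0⟩
  rw [s.affineCombination_eq_linear_combination _ _ hw] at h0
  have hw0 : ∀ i ∈ s, w i = 0 := linearIndependent_iff'.1 hv s w h0
  exact zero_ne_one ((Finset.sum_eq_zero hw0).symm.trans hw)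

theorem zero_notMem_octahedralSphere [AddCommGroup E] [Module ℝ E] {e : ℕ → E} {n : ℕ}
    (he : LinearIndependent ℝ fun i : Fin (n + 1) => e i) : 0 ∉ octahedralSphere e n := by
  simp only [octahedralSphere, mem_iUnion, not_exists]
  exact fun ε => zero_notMem_convexHull_of_linearIndependent (he.group_smul ε)

theorem octahedralHemisphere_mem_chainsIn_octahedralSphere [AddCommGroup E] [Module ℝ E]
    (e : ℕ → E) {k n : ℕ} (hk : k ≤ n) :
    octahedralHemisphere e k ∈ chainsIn {s | convexHull ℝ (range s) ⊆ octahedralSphere e n} := by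
  refine supported_mono ?_ (octahedralHemisphere_mem_chainsIn e k)
  rintro s ⟨ε, hε⟩
  refine subset_iUnion_of_subset (fun i : Fin (n + 1) => ε i) (convexHull_mono ?_)
  rintro _ ⟨i, rfl⟩
  obtain ⟨j, hj, hs⟩ := hε i
  exact ⟨⟨j, by omega⟩, hs.symm⟩

theorem exists_isHemisphereTower_diam_lt [NormedAddCommGroup E] [NormedSpace ℝ E] (e : ℕ → E)
    (n : ℕ) {δ : ℝ} (hδ : 0 < δ) :
    ∃ c : ∀ k : ℕ, Chain E (k + 1), IsHemisphereTower c ∧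
      (∀ k < n, c k ∈ chainsIn {s | range s ⊆ octahedralSphere e n}) ∧
      c n ∈ chainsIn {s | range s ⊆ octahedralSphere e n ∧ Metric.diam (range s) < δ} := by
  set X := octahedralSphere e n
  have hX : Bornology.IsBounded X := (isCompact_octahedralSphere e n).isBounded
  obtain ⟨m, hm⟩ : ∃ m : ℕ, ((n + 1 : ℕ) / ((n + 1 : ℕ) + 1) : ℝ) ^ m * Metric.diam X < δ := by
    refine (((tendsto_pow_atTop_nhds_zero_of_lt_one (by positivity) ?_).mul_const
      (Metric.diam X)).eventually_lt_const (by simpa)).exists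
    exact (div_lt_one (by positivity)).2 (lt_add_one _)
  have hhemi (k : ℕ) (hk : k ≤ n) : octahedralHemisphere e k ∈
      chainsIn {s | convexHull ℝ (range s) ⊆ X ∧ Metric.diam (range s) ≤ Metric.diam X} := by
    refine supported_mono ?_ (octahedralHemisphere_mem_chainsIn_octahedralSphere e hk)
    exact fun s hs => ⟨hs, Metric.diam_mono ((subset_convexHull ℝ _).trans hs) hX⟩
  have hsub (k : ℕ) (hk : k ≤ n) := iterate_subdivide_mem_chainsIn m (hhemi k hk)
  refine ⟨_, (isHemisphereTower_octahedralHemisphere e).iterate_subdivide m,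
    fun k hk => supported_mono ?_ (hsub k hk.le), supported_mono ?_ (hsub n le_rfl)⟩
  · exact fun s hs => (subset_convexHull ℝ _).trans hs.1
  · exact fun s hs => ⟨(subset_convexHull ℝ _).trans hs.1, hs.2.trans_lt hm⟩

end OctahedralSphere

section Crossing

variable {E : Type*} {k n : ℕ}

/-- The cup product of the coboundaries of the 0-cochains `θ i`, evaluated on a simplex: it is
nonzero exactly when `θ i` changes along the `i`-th edge of the vertex path, for every `i`. -/
def crossing (θ : Fin k → E → ZMod 2) (s : Fin (k + 1) → E) : ZMod 2 :=
  ∏ i, (θ i (s i.castSucc) + θ i (s i.succ))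

/-- The value of a cochain modulo 2 on a chain. -/
abbrev pairing (F : (Fin n → E) → ZMod 2) : Chain E n →ₗ[ZMod 2] ZMod 2 :=
  linearCombination (ZMod 2) F

theorem pairing_cone (F : (Fin (n + 1) → E) → ZMod 2) (p : E) (c : Chain E n) :
    pairing F (cone p c) = pairing (fun s => F (Fin.cons p s)) c := by
  rw [cone, lmapDomain_apply, linearCombination_mapDomain]
  rfl

theorem crossing_cons (θ₀ : E → ZMod 2) (θ : Fin k → E → ZMod 2) (p : E) (s : Fin (k + 1) → E) :
    crossing (Fin.cons θ₀ θ : Fin (k + 1) → E → ZMod 2) (Fin.cons p s) =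
      (θ₀ p + θ₀ (s 0)) * crossing θ s := by
  simp only [crossing, Fin.prod_univ_succ (n := k), Fin.cons_zero, Fin.cons_succ, Fin.castSucc_zero,
    ← Fin.succ_castSucc]

theorem pairing_crossing_cone (θ₀ : E → ZMod 2) (θ : Fin k → E → ZMod 2) (p : E)
    (c : Chain E (k + 1)) :
    pairing (crossing (Fin.cons θ₀ θ : Fin (k + 1) → E → ZMod 2)) (cone p c) =
      θ₀ p * pairing (crossing θ) c + pairing (fun s => θ₀ (s 0) * crossing θ s) c := by
  rw [pairing_cone]
  suffices pairing (fun s => crossing (Fin.cons θ₀ θ : Fin (k + 1) → E → ZMod 2) (Fin.cons p s)) =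
      θ₀ p • pairing (crossing θ) + pairing (fun s => θ₀ (s 0) * crossing θ s) by rw [this]; rfl
  ext s
  simp [crossing_cons, add_mul]

theorem pairing_head_mul_cone (θ₀ : E → ZMod 2) (F : (Fin (n + 1) → E) → ZMod 2) (p : E)
    (c : Chain E n) :
    pairing (fun s => θ₀ (s 0) * F s) (cone p c) = θ₀ p * pairing F (cone p c) := by
  simp only [pairing_cone, Fin.cons_zero]
  simp [linearCombination_apply, Finsupp.mul_sum, mul_left_comm]

-- In cochain notation, `δ (θ₀ ∪ ω) = δθ₀ ∪ ω` for the cocycle `ω = δθ₁ ∪ ⋯ ∪ δθₖ`.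
theorem pairing_head_mul_crossing_boundary_of_cocycle {θ : Fin k → E → ZMod 2}
    (h : ∀ c, pairing (crossing θ) (boundary c) = 0) (θ₀ : E → ZMod 2) (c : Chain E (k + 2)) :
    pairing (fun s => θ₀ (s 0) * crossing θ s) (boundary c) =
      pairing (crossing (Fin.cons θ₀ θ : Fin (k + 1) → E → ZMod 2)) c := by
  suffices pairing (fun s => θ₀ (s 0) * crossing θ s) ∘ₗ boundary (n := k + 1) =
      pairing (crossing (Fin.cons θ₀ θ : Fin (k + 1) → E → ZMod 2)) from DFunLike.congr_fun this c
  refine chain_hom_ext_cone fun p c => ?_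
  have hcone : pairing (crossing θ) c = pairing (crossing θ) (cone p (boundary c)) := by
    have := h (cone p c)
    rwa [boundary_cone, map_add, CharTwo.add_eq_zero] at this
  rw [LinearMap.comp_apply, boundary_cone, map_add, pairing_head_mul_cone, pairing_crossing_cone,
    hcone, add_comm]

theorem pairing_crossing_boundary (θ : Fin k → E → ZMod 2) (c : Chain E (k + 2)) :
    pairing (crossing θ) (boundary c) = 0 := by
  induction k with
  | zero =>
    suffices pairing (crossing θ) ∘ₗ boundary (n := 1) = 0 from DFunLike.congr_fun this c
    ext s
    simp [crossing, Fin.sum_univ_two, CharTwo.add_self_eq_zero]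
  | succ k ih =>
    rw [← Fin.cons_self_tail θ, ← pairing_head_mul_crossing_boundary_of_cocycle (ih _),
      boundary_boundary, map_zero]

theorem pairing_head_mul_crossing_boundary (θ₀ : E → ZMod 2) (θ : Fin k → E → ZMod 2)
    (c : Chain E (k + 2)) :
    pairing (fun s => θ₀ (s 0) * crossing θ s) (boundary c) =
      pairing (crossing (Fin.cons θ₀ θ : Fin (k + 1) → E → ZMod 2)) c :=
  pairing_head_mul_crossing_boundary_of_cocycle (pairing_crossing_boundary θ) θ₀ c

theorem crossing_neg [Neg E] {X : Set E} {θ : Fin k → E → ZMod 2}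
    (hθ : ∀ i, ∀ x ∈ X, θ i (-x) = θ i x + 1) {s : Fin (k + 1) → E} (hs : ∀ i, s i ∈ X) :
    crossing θ (-s) = crossing θ s := by
  refine Finset.prod_congr rfl fun i _ => ?_
  rw [Pi.neg_apply, Pi.neg_apply, hθ i _ (hs _), hθ i _ (hs _), add_add_add_comm,
    CharTwo.add_self_eq_zero, add_zero]

theorem pairing_head_mul_crossing_add_antipode [Neg E] {X : Set E} {θ₀ : E → ZMod 2}
    {θ : Fin k → E → ZMod 2} (hθ₀ : ∀ x ∈ X, θ₀ (-x) = θ₀ x + 1)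
    (hθ : ∀ i, ∀ x ∈ X, θ i (-x) = θ i x + 1) {c : Chain E (k + 1)}
    (hc : c ∈ chainsIn {s | range s ⊆ X}) :
    pairing (fun s => θ₀ (s 0) * crossing θ s) (c + antipode c) = pairing (crossing θ) c := by
  have hsum : pairing (fun s => θ₀ (s 0) * crossing θ s) (c + antipode c) =
      (pairing (fun s => θ₀ (s 0) * crossing θ s) ∘ₗ (LinearMap.id + antipode)) c := rfl
  rw [hsum]
  refine map_eq_of_mem_chainsIn (fun s hs => ?_) hc
  have hsX : ∀ i, s i ∈ X := range_subset_iff.1 hs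
  simp only [LinearMap.comp_apply, LinearMap.add_apply, LinearMap.id_apply, antipode_single,
    map_add, linearCombination_single, one_smul, Pi.neg_apply, crossing_neg hθ hsX, hθ₀ _ (hsX 0)]
  rw [← add_mul, ← add_assoc, CharTwo.add_self_eq_zero, zero_add, one_mul]

theorem IsHemisphereTower.pairing_crossing [Neg E] {X : Set E}
    {c : ∀ k : ℕ, Chain E (k + 1)} (hc : IsHemisphereTower c)
    (hX : ∀ k < n, c k ∈ chainsIn {s | range s ⊆ X}) {θ : Fin n → E → ZMod 2}
    (hθ : ∀ i, ∀ x ∈ X, θ i (-x) = θ i x + 1) : pairing (crossing θ) (c n) = 1 := by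
  induction n with
  | zero =>
    have haug : pairing (fun _ : Fin 0 → E => 1) ∘ₗ boundary = pairing (crossing θ) := by
      ext s
      simp [crossing]
    rw [← haug, LinearMap.comp_apply, hc.boundary_zero, linearCombination_single, one_smul]
  | succ n ih =>
    have hθtail : ∀ i, ∀ x ∈ X, Fin.tail θ i (-x) = Fin.tail θ i x + 1 := fun i => hθ i.succ
    calc pairing (crossing θ) (c (n + 1))
        = pairing (fun s => θ 0 (s 0) * crossing (Fin.tail θ) s) (boundary (c (n + 1))) := by
          rw [pairing_head_mul_crossing_boundary, Fin.cons_self_tail]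
      _ = pairing (crossing (Fin.tail θ)) (c n) := by
          rw [hc.boundary_succ,
            pairing_head_mul_crossing_add_antipode (hθ 0) hθtail (hX n n.lt_succ_self)]
      _ = 1 := ih (fun k hk => hX k (hk.trans n.lt_succ_self)) hθtail

theorem IsHemisphereTower.exists_crossing [Neg E] {X : Set E} {S : Set (Fin (n + 1) → E)}
    {c : ∀ k : ℕ, Chain E (k + 1)} (hc : IsHemisphereTower c)
    (hX : ∀ k < n, c k ∈ chainsIn {s | range s ⊆ X}) (hS : c n ∈ chainsIn S)
    {θ : Fin n → E → ZMod 2} (hθ : ∀ i, ∀ x ∈ X, θ i (-x) = θ i x + 1) :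
    ∃ s ∈ S, ∀ i, θ i (s i.castSucc) ≠ θ i (s i.succ) := by
  by_contra! h
  have hcross : ∀ s ∈ S, crossing θ s = 0 := fun s hs => by
    obtain ⟨i, hi⟩ := h s hs
    exact Finset.prod_eq_zero (Finset.mem_univ i) (by rw [hi, CharTwo.add_self_eq_zero])
  have hzero : pairing (crossing θ) (c n) = (0 : Chain E (n + 1) →ₗ[ZMod 2] ZMod 2) (c n) :=
    map_eq_of_mem_chainsIn (fun s hs => by simp [hcross s hs]) hS
  exact one_ne_zero ((hc.pairing_crossing hX hθ).symm.trans hzero)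

end Crossing

section OddMap

open Metric

variable {E : Type*} {n : ℕ}

theorem exists_sign_cochain [InvolutiveNeg E] {X : Set E} (hX : ∀ x ∈ X, -x ≠ x) {g : E → ℝ}
    (hg : ∀ x ∈ X, g (-x) = -g x) :
    ∃ θ : E → ZMod 2, (∀ x ∈ X, θ (-x) = θ x + 1) ∧ ∀ x y, θ x ≠ θ y → g x * g y ≤ 0 := by
  classical
  -- A well-ordering picks one of `x` and `-x` when `g x = 0`, which keeps the sign odd there.
  let neg (x : E) : Prop := g x < 0 ∨ g x = 0 ∧ WellOrderingRel x (-x)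
  have hneg : ∀ x ∈ X, neg (-x) ↔ ¬neg x := fun x hx => by
    have hasymm : WellOrderingRel x (-x) → ¬WellOrderingRel (-x) x := asymm
    have htri := trichotomous_of WellOrderingRel x (-x)
    have hne := hX x hx
    simp only [neg, hg x hx, neg_neg]
    rcases lt_trichotomy (g x) 0 with h | h | h <;> grind
  refine ⟨fun x => if neg x then 1 else 0, fun x hx => ?_, fun x y hxy => ?_⟩
  · by_cases h : neg x <;> simp [hneg x hx, h, CharTwo.add_self_eq_zero]
  · have hle (x : E) (h : neg x) : g x ≤ 0 := h.elim le_of_lt fun h => h.1.le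
    have hge (x : E) (h : ¬neg x) : 0 ≤ g x := not_lt.1 fun hlt => h (.inl hlt)
    by_cases hx : neg x <;> by_cases hy : neg y
    · simp [hx, hy] at hxy
    · exact mul_nonpos_of_nonpos_of_nonneg (hle x hx) (hge y hy)
    · exact mul_nonpos_of_nonneg_of_nonpos (hge x hx) (hle y hy)
    · simp [hx, hy] at hxy

theorem abs_lt_of_mul_nonpos_of_abs_sub_lt {a b t ε : ℝ} (hab : a * b ≤ 0) (ha : |t - a| < ε)
    (hb : |t - b| < ε) : |t| < ε := by
  rw [abs_lt] at *
  rcases mul_nonpos_iff.1 hab with ⟨ha0, hb0⟩ | ⟨ha0, hb0⟩ <;> constructor <;> linarith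

variable [NormedAddCommGroup E] [NormedSpace ℝ E]

theorem exists_zero_of_odd_octahedralSphere {e : ℕ → E}
    (he : LinearIndependent ℝ fun i : Fin (n + 1) => e i) {f : E → Fin n → ℝ}
    (hf : ContinuousOn f (octahedralSphere e n))
    (hodd : ∀ x ∈ octahedralSphere e n, f (-x) = -f x) :
    ∃ x ∈ octahedralSphere e n, f x = 0 := by
  have : IsAddTorsionFree E := .of_isTorsionFree ℝ E
  set X := octahedralSphere e n
  have hXc : IsCompact X := isCompact_octahedralSphere e n
  have hX : ∀ x ∈ X, -x ≠ x := fun x hx h =>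
    zero_notMem_octahedralSphere he (neg_eq_self.1 h ▸ hx)
  choose θ hθ hsign using fun i =>
    exists_sign_cochain (g := fun x => f x i) hX fun x hx => congrFun (hodd x hx) i
  have hsmall (ε : ℝ) (hε : 0 < ε) : ∃ x ∈ X, ‖f x‖ < ε := by
    obtain ⟨δ, hδ, hfδ⟩ := uniformContinuousOn_iff.1 (hXc.uniformContinuousOn_of_continuous hf) ε hε
    obtain ⟨c, hc, hcX, hcδ⟩ := exists_isHemisphereTower_diam_lt e n hδ
    obtain ⟨s, ⟨hsX, hsδ⟩, hs⟩ := hc.exists_crossing hcX hcδ hθ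
    rw [range_subset_iff] at hsX
    have hdist (i j) : dist (f (s i)) (f (s j)) < ε := hfδ _ (hsX i) _ (hsX j) <|
      (dist_le_diam_of_mem (Set.finite_range s).isBounded
        (mem_range_self i) (mem_range_self j)).trans_lt hsδ
    refine ⟨s 0, hsX 0, (pi_norm_lt_iff hε).2 fun i => ?_⟩
    exact abs_lt_of_mul_nonpos_of_abs_sub_lt (hsign i _ _ (hs i))
      ((dist_le_pi_dist _ _ i).trans_lt (hdist _ _)) ((dist_le_pi_dist _ _ i).trans_lt (hdist _ _))
  have hXne : X.Nonempty := (hsmall 1 one_pos).imp fun _ h => h.1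
  obtain ⟨x, hx, hmin⟩ := hXc.exists_isMinOn hXne hf.norm
  refine ⟨x, hx, ?_⟩
  by_contra hfx
  obtain ⟨y, hy, hlt⟩ := hsmall ‖f x‖ (norm_pos_iff.2 hfx)
  exact hlt.not_ge (hmin hy)

theorem borsuk_ulam (hn : n < Module.finrank ℝ E) {f : E → Fin n → ℝ}
    (hf : ContinuousOn f (sphere 0 1)) (hodd : ∀ x ∈ sphere (0 : E) 1, f (-x) = -f x) :
    ∃ x ∈ sphere (0 : E) 1, f x = 0 := by
  obtain ⟨v, hv⟩ := exists_linearIndependent_of_le_finrank (R := ℝ) hn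
  let e : ℕ → E := Function.extend Fin.val v 0
  have he : LinearIndependent ℝ fun i : Fin (n + 1) => e i := by
    simpa only [e, Fin.val_injective.extend_apply] using hv
  have hne : ∀ x ∈ octahedralSphere e n, ‖x‖ ≠ 0 := fun x hx h =>
    zero_notMem_octahedralSphere he (norm_eq_zero.1 h ▸ hx)
  have hmaps : MapsTo (fun x : E => ‖x‖⁻¹ • x) (octahedralSphere e n) (sphere 0 1) := fun x hx => by
    simp [norm_smul, hne x hx]
  have hcont : ContinuousOn (fun x : E => ‖x‖⁻¹ • x) (octahedralSphere e n) :=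
    (continuousOn_id.norm.inv₀ hne).smul continuousOn_id
  obtain ⟨x, hx, hfx⟩ := exists_zero_of_odd_octahedralSphere he (hf.comp hcont hmaps) fun x hx => by
    simpa using hodd _ (hmaps hx)
  exact ⟨_, hmaps hx, hfx⟩

end OddMap

section Covering

variable {E : Type*}

theorem exists_odd_eq_one_iff_mem [TopologicalSpace E] [PerfectlyNormalSpace E] [InvolutiveNeg E]
    [ContinuousNeg E] {A : Set E} (hA : IsClosed A) (hdisj : Disjoint A (-A)) :
    ∃ h : E → ℝ, Continuous h ∧ (∀ x, h (-x) = -h x) ∧ ∀ x, h x = 1 ↔ x ∈ A := by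
  obtain ⟨φ, rfl, hφ⟩ := perfectlyNormalSpace_iff_forall_isClosed_preimage_zero.1 ‹_› A hA
  have hpos (x : E) : 0 < φ (-x) + φ x := by
    refine (add_nonneg (hφ _).1 (hφ _).1).lt_of_ne' fun h => ?_
    obtain ⟨hneg, hx⟩ := (add_eq_zero_iff_of_nonneg (hφ _).1 (hφ _).1).1 h
    exact hdisj.le_bot ⟨hx, hneg⟩
  refine ⟨fun x => (φ (-x) - φ x) / (φ (-x) + φ x), ?_, fun x => ?_, fun x => ?_⟩
  · exact Continuous.div (by fun_prop) (by fun_prop) fun x => (hpos x).ne'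
  · simp only [neg_neg, add_comm (φ x), ← neg_div, neg_sub]
  · rw [div_eq_one_iff_eq (hpos x).ne', mem_preimage, mem_singleton_iff]
    constructor <;> intro h <;> linarith

end Covering

end

end BorsukUlam

theorem stmt3_general {E : Type*} [NormedAddCommGroup E] [NormedSpace ℝ E] {n : ℕ}
    (hn : n < Module.finrank ℝ E) (A : Fin (n + 1) → Set E) (hclosed : ∀ i, IsClosed (A i))
    (hdisj : ∀ i, Disjoint (A i) (-A i)) (hcover : Metric.sphere 0 1 ⊆ ⋃ i, (A i ∪ -A i)) :
    (Metric.sphere 0 1 ∩ ⋂ i, A i).Nonempty := by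
  choose h hcont hodd hmem using fun i =>
    BorsukUlam.exists_odd_eq_one_iff_mem (hclosed i) (hdisj i)
  obtain ⟨x, hx, hfx⟩ := BorsukUlam.borsuk_ulam hn (f := fun x i => h i.succ x - h 0 x)
    (by fun_prop) fun x _ => by
      ext i
      simp only [hodd, Pi.neg_apply]
      ring
  have heq (i j) : h i x = h j x := by
    have hzero : ∀ i, h i x = h 0 x :=
      Fin.cases rfl fun i => sub_eq_zero.1 (congrFun hfx i)
    rw [hzero i, hzero j]
  obtain ⟨j, hj | hj⟩ := Set.mem_iUnion.1 (hcover hx)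
  · exact ⟨x, hx, Set.mem_iInter.2 fun i => (hmem i x).1 <| by rw [heq i j, (hmem j x).2 hj]⟩
  · refine ⟨-x, by simpa using hx, Set.mem_iInter.2 fun i => (hmem i _).1 ?_⟩
    rw [hodd, heq i j, ← hodd, (hmem j _).2 hj]

/-- For closed sets `A₁,…,A_{d+1} ⊆ S^d` with `A_i ∩ (-A_i) = ∅` that together with their
antipodes cover `S^d`, the intersection `⋂ A_i` is nonempty. -/
theorem stmt3 (d : ℕ)
    (A : Fin (d + 1) → Set (EuclideanSpace ℝ (Fin (d + 1))))
    (hclosed : ∀ i, IsClosed (A i))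
    (hsub : ∀ i, A i ⊆ Metric.sphere (0 : EuclideanSpace ℝ (Fin (d + 1))) 1)
    (hdisj : ∀ i, A i ∩ (-A i) = ∅)
    (hcover : Metric.sphere (0 : EuclideanSpace ℝ (Fin (d + 1))) 1 ⊆ ⋃ i, (A i ∪ -A i)) :
    (⋂ i, A i).Nonempty :=
  (stmt3_general (by simp) A hclosed (fun i => Set.disjoint_iff_inter_eq_empty.2 (hdisj i))
    hcover).mono Set.inter_subset_right
end
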